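/- arXiv:2206.14032 — 2 statements merged into one kernel-verified Lean document; each statement's English description precedes it below -/
import Mathlib

section
/- Let $a$, $b$, $c$ be coprime positive integers with $\min\{a,b,c\} > 1$, where $c$ is an odd prime and $(a,b,c) \neq (3,10,13)$ and $(a,b,c) \neq (10,3,13)$. If $(x_1,y_1,z_1)$ and $(x_2,y_2,z_2)$ are solutions in positive integers of $a^x + b^y = c^z$ with $x_1 \equiv x_2 \pmod 2$ and $y_1 \equiv y_2 \pmod 2$, then $(x_1,y_1,z_1) = (x_2,y_2,z_2)$. -/
/-!
Fix a parity class and let `p, q ∈ {1, 2}` have its parities. With `A = a ^ p` and `B = b ^ q`, the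
solutions in the class are primitive representations of powers of `c` by `A * u ^ 2 + B * v ^ 2`
for which `u` is a power of `a` and `v` a power of `b`. Since only one pair of conjugate primes lies
above `c`, all primitive representations are, up to signs, odd powers of the one with the least
exponent, say of `√G + √N` with `G = A * u₀ ^ 2` and `N = -B * v₀ ^ 2`.

So a solution is a power `(√G + √N) ^ (2 * k + 1)` whose two coefficients have only prime factors of
`G` and of `N` respectively. As in Størmer's theorem on Pell equations, a prime exponent `2 * k + 1`
greater than `3` is impossible: both coefficients would divide `2 * k + 1`, which is too small
for the norm `(G - N) ^ (2 * k + 1)`. A cube forces one coefficient to be `± 1` and the other to be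
`± 3 ^ i` with `i ≥ 2`, and this cannot happen twice in succession. Hence `k ≤ 1`, and two distinct
solutions would be `√G + √N` and its cube. This occurs only for
`(√3 + √-10) ^ 3 = -27 * √3 - √-10` and its mirror image, which give the two excluded triples.
-/

section OddPowCoeff

variable {R S : Type*} [CommRing R] [CommRing S]

/-- The coefficient of `√G` in `(√G + √N) ^ (2 * k + 1)`; that of `√N` is `oddPowCoeff N G k`. -/
def oddPowCoeff : R → R → ℕ → R
  | _, _, 0 => 1
  | G, N, k + 1 => (G + N) * oddPowCoeff G N k + 2 * N * oddPowCoeff N G k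

@[simp]
lemma oddPowCoeff_zero (G N : R) : oddPowCoeff G N 0 = 1 := by rw [oddPowCoeff]

lemma oddPowCoeff_succ (G N : R) (k : ℕ) :
    oddPowCoeff G N (k + 1) = (G + N) * oddPowCoeff G N k + 2 * N * oddPowCoeff N G k := by
  rw [oddPowCoeff]

lemma oddPowCoeff_one (G N : R) : oddPowCoeff G N 1 = G + 3 * N := by
  rw [oddPowCoeff_succ, oddPowCoeff_zero, oddPowCoeff_zero]; ring

lemma map_oddPowCoeff (φ : R →+* S) (G N : R) (k : ℕ) :
    φ (oddPowCoeff G N k) = oddPowCoeff (φ G) (φ N) k := by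
  induction k generalizing G N with
  | zero => simp
  | succ k ih => simp only [oddPowCoeff_succ, map_add, map_mul, map_ofNat, ih]

lemma mul_oddPowCoeff_sq_sub (G N : R) (k : ℕ) :
    G * oddPowCoeff G N k ^ 2 - N * oddPowCoeff N G k ^ 2 = (G - N) ^ (2 * k + 1) := by
  induction k with
  | zero => simp
  | succ k ih =>
    rw [oddPowCoeff_succ, oddPowCoeff_succ]
    linear_combination (G - N) ^ 2 * ih

lemma add_pow_two_mul_add_one (g h : R) (k : ℕ) :
    (g + h) ^ (2 * k + 1) =
      g * oddPowCoeff (g ^ 2) (h ^ 2) k + h * oddPowCoeff (h ^ 2) (g ^ 2) k := by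
  induction k with
  | zero => simp
  | succ k ih =>
    rw [oddPowCoeff_succ, oddPowCoeff_succ]
    linear_combination (g + h) ^ 2 * ih

lemma oddPowCoeff_sq_comp [IsDomain R] (h2 : (2 : R) ≠ 0) {g : R} (hg : g ≠ 0) (h : R)
    {j k K : ℕ} (hK : 2 * K + 1 = (2 * j + 1) * (2 * k + 1)) :
    oddPowCoeff (g ^ 2) (h ^ 2) K = oddPowCoeff (g ^ 2) (h ^ 2) j *
      oddPowCoeff (g ^ 2 * oddPowCoeff (g ^ 2) (h ^ 2) j ^ 2)
        (h ^ 2 * oddPowCoeff (h ^ 2) (g ^ 2) j ^ 2) k := by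
  have expand (h' : R) := calc
    g * oddPowCoeff (g ^ 2) (h' ^ 2) K + h' * oddPowCoeff (h' ^ 2) (g ^ 2) K
        = ((g + h') ^ (2 * j + 1)) ^ (2 * k + 1) := by
          rw [← add_pow_two_mul_add_one, hK, pow_mul]
      _ = _ := by rw [add_pow_two_mul_add_one g h' j, add_pow_two_mul_add_one]
  have plus := expand h
  -- The conjugate expansion isolates the coefficient of `g`.
  have minus := expand (-h)
  simp only [neg_sq, neg_mul, mul_pow] at plus minus
  refine mul_left_cancel₀ (mul_ne_zero h2 hg) ?_
  linear_combination plus + minus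

lemma oddPowCoeff_comp [IsDomain R] (h2 : (2 : R) ≠ 0) {G : R} (hG : G ≠ 0) (N : R)
    {j k K : ℕ} (hK : 2 * K + 1 = (2 * j + 1) * (2 * k + 1)) :
    oddPowCoeff G N K = oddPowCoeff G N j *
      oddPowCoeff (G * oddPowCoeff G N j ^ 2) (N * oddPowCoeff N G j ^ 2) k := by
  let F := FractionRing R
  let φ : R →+* AlgebraicClosure F := (algebraMap F _).comp (algebraMap R F)
  have hφ : Function.Injective φ :=
    (algebraMap F _).injective.comp (IsFractionRing.injective R F)
  obtain ⟨g, hg⟩ := IsAlgClosed.exists_pow_nat_eq (φ G) two_pos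
  obtain ⟨h, hh⟩ := IsAlgClosed.exists_pow_nat_eq (φ N) two_pos
  have h2' : (2 : AlgebraicClosure F) ≠ 0 := by
    simpa only [map_ofNat] using (map_ne_zero_iff φ hφ).2 h2
  have hg0 : g ≠ 0 := by
    rintro rfl
    exact (map_ne_zero_iff φ hφ).2 hG (by simpa using hg.symm)
  apply hφ
  simpa only [map_oddPowCoeff, map_mul, map_pow, hg, hh] using oddPowCoeff_sq_comp h2' hg0 h hK

lemma sub_dvd_add_mul_oddPowCoeff_sub (G N : R) (k : ℕ) :
    G - N ∣ (G + N) * oddPowCoeff G N k - 2 * N * oddPowCoeff N G k := by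
  cases k with
  | zero => exact ⟨1, by simp; ring⟩
  | succ k => exact ⟨(G - N) * oddPowCoeff G N k, by simp only [oddPowCoeff_succ]; ring⟩

lemma dvd_oddPowCoeff_sub (G N : R) (k : ℕ) :
    G ∣ oddPowCoeff G N k - (2 * k + 1) * N ^ k ∧ G ∣ oddPowCoeff N G k - N ^ k := by
  induction k with
  | zero => simp
  | succ k ih =>
    obtain ⟨⟨s, hs⟩, ⟨t, ht⟩⟩ := ih
    constructor
    · refine ⟨oddPowCoeff G N k + N * s + 2 * N * t, ?_⟩
      rw [oddPowCoeff_succ]; push_cast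
      linear_combination N * hs + 2 * N * ht
    · refine ⟨oddPowCoeff N G k + N * t + 2 * oddPowCoeff G N k, ?_⟩
      rw [oddPowCoeff_succ]
      linear_combination N * ht

lemma sq_dvd_oddPowCoeff_sub (G N : R) (k : ℕ) :
    G ^ 2 ∣ oddPowCoeff G N (k + 1) -
      ((2 * k + 3) * N ^ (k + 1) + (2 * k + 3).choose 3 * G * N ^ k) ∧
    G ^ 2 ∣ oddPowCoeff N G (k + 1) - (N ^ (k + 1) + (2 * k + 3).choose 2 * G * N ^ k) := by
  induction k with
  | zero =>
    simp only [oddPowCoeff_one, zero_add, Nat.choose_self, show Nat.choose 3 2 = 3 from rfl]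
    constructor <;> exact ⟨0, by push_cast; ring⟩
  | succ k ih =>
    obtain ⟨⟨s, hs⟩, ⟨t, ht⟩⟩ := ih
    have choose_two : (2 * (k + 1) + 3).choose 2 = 1 + 2 * (2 * k + 3) + (2 * k + 3).choose 2 := by
      rw [show 2 * (k + 1) + 3 = 2 * k + 3 + 1 + 1 by ring]
      simp only [Nat.choose_succ_succ' _ 1, Nat.choose_one_right]; ring
    have choose_three : (2 * (k + 1) + 3).choose 3 =
        2 * k + 3 + 2 * (2 * k + 3).choose 2 + (2 * k + 3).choose 3 := by
      rw [show 2 * (k + 1) + 3 = 2 * k + 3 + 1 + 1 by ring]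
      simp only [Nat.choose_succ_succ' _ 2, Nat.choose_succ_succ' _ 1, Nat.choose_one_right]; ring
    obtain ⟨s', hs'⟩ := (dvd_oddPowCoeff_sub G N (k + 1)).1
    rw [oddPowCoeff_succ _ _ (k + 1), oddPowCoeff_succ _ _ (k + 1), choose_two, choose_three]
    push_cast at hs' ⊢
    constructor
    · refine ⟨(G + N) * s + 2 * N * t + (2 * k + 3).choose 3 * N ^ k, ?_⟩
      linear_combination (G + N) * hs + 2 * N * ht
    · refine ⟨(G + N) * t + 2 * s' + (2 * k + 3).choose 2 * N ^ k, ?_⟩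
      linear_combination (G + N) * ht + 2 * G * hs'

end OddPowCoeff

section StormerIndex

/-- `k` is a Størmer index of `(G, N)` if each of the two coefficients of `(√G + √N) ^ (2 * k + 1)`
has only prime factors of its own radicand; this is expressed by divisibility of a power. -/
def IsStormerIndex {R : Type*} [CommRing R] (G N : R) (k : ℕ) : Prop :=
  (∃ n, oddPowCoeff G N k ∣ G ^ n) ∧ ∃ n, oddPowCoeff N G k ∣ N ^ n

variable {R : Type*} [CommRing R] {G N : R} {j k K : ℕ}

lemma IsStormerIndex.symm (h : IsStormerIndex G N k) : IsStormerIndex N G k :=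
  And.symm h

lemma IsStormerIndex.isCoprime_mul_sq (hGN : IsCoprime G N) (h : IsStormerIndex G N k) :
    IsCoprime (G * oddPowCoeff G N k ^ 2) (N * oddPowCoeff N G k ^ 2) := by
  obtain ⟨⟨m, hm⟩, ⟨n, hn⟩⟩ := h
  have dvd_left : G * oddPowCoeff G N k ^ 2 ∣ G * (G ^ m) ^ 2 :=
    mul_dvd_mul_left _ (pow_dvd_pow_of_dvd hm 2)
  have dvd_right : N * oddPowCoeff N G k ^ 2 ∣ N * (N ^ n) ^ 2 :=
    mul_dvd_mul_left _ (pow_dvd_pow_of_dvd hn 2)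
  refine IsCoprime.of_isCoprime_of_dvd_left (.of_isCoprime_of_dvd_right ?_ dvd_right) dvd_left
  simp only [← pow_mul, ← pow_succ']
  exact hGN.pow

lemma IsStormerIndex.exists_dvd_pow (hGN : IsCoprime G N) (h : IsStormerIndex G N k) :
    ∃ n, oddPowCoeff G N k ∣ (2 * k + 1) ^ n := by
  obtain ⟨n, hn⟩ := h.1
  obtain ⟨t, ht⟩ := (dvd_oddPowCoeff_sub G N k).1
  set U := oddPowCoeff G N k
  have coprime : IsCoprime U ((N ^ k) ^ n) :=
    (hGN.pow_left.of_isCoprime_of_dvd_left hn).pow_right.pow_right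
  refine ⟨n, coprime.dvd_of_dvd_mul_right ?_⟩
  have dvd_pow_sub : U ∣ ((2 * k + 1) * N ^ k - U) ^ n := by
    rw [show (2 * k + 1) * N ^ k - U = G * -t by linear_combination -ht, mul_pow]
    exact hn.mul_right _
  have := sub_dvd_pow_sub_pow ((2 * k + 1) * N ^ k) ((2 * k + 1) * N ^ k - U) n
  rw [sub_sub_cancel] at this
  rw [← mul_pow]
  exact (dvd_sub_left dvd_pow_sub).1 this

variable [IsDomain R]

lemma IsStormerIndex.oddPowCoeff_ne_zero (hG : G ≠ 0) (h : IsStormerIndex G N k) :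
    oddPowCoeff G N k ≠ 0 := by
  obtain ⟨n, hn⟩ := h.1
  exact ne_zero_of_dvd_ne_zero (pow_ne_zero n hG) hn

lemma IsStormerIndex.left_of_mul (h2 : (2 : R) ≠ 0) (hG : G ≠ 0) (hN : N ≠ 0)
    (hK : 2 * K + 1 = (2 * j + 1) * (2 * k + 1)) (h : IsStormerIndex G N K) :
    IsStormerIndex G N j := by
  obtain ⟨⟨m, hm⟩, ⟨n, hn⟩⟩ := h
  rw [oddPowCoeff_comp h2 hG N hK] at hm
  rw [oddPowCoeff_comp h2 hN G hK] at hn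
  exact ⟨⟨m, dvd_of_mul_right_dvd hm⟩, ⟨n, dvd_of_mul_right_dvd hn⟩⟩

lemma IsStormerIndex.right_of_mul (h2 : (2 : R) ≠ 0) (hG : G ≠ 0) (hN : N ≠ 0)
    (hK : 2 * K + 1 = (2 * j + 1) * (2 * k + 1)) (h : IsStormerIndex G N K) :
    IsStormerIndex (G * oddPowCoeff G N j ^ 2) (N * oddPowCoeff N G j ^ 2) k := by
  obtain ⟨⟨m, hm⟩, ⟨n, hn⟩⟩ := h
  rw [oddPowCoeff_comp h2 hG N hK] at hm
  rw [oddPowCoeff_comp h2 hN G hK] at hn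
  constructor
  · exact ⟨m, (dvd_of_mul_left_dvd hm).trans (pow_dvd_pow_of_dvd (dvd_mul_right _ _) m)⟩
  · exact ⟨n, (dvd_of_mul_left_dvd hn).trans (pow_dvd_pow_of_dvd (dvd_mul_right _ _) n)⟩

end StormerIndex

section Cubic

lemma one_lt_mul_sq {x y : ℤ} (hx : 1 < x) (hy : y ≠ 0) : 1 < x * y ^ 2 :=
  one_lt_mul_of_lt_of_le hx (Int.add_one_le_of_lt (sq_pos_of_ne_zero hy))

/-- The pairs with `(√G + √N) ^ 3 = ± 3 ^ i * √G ± √N` where `i ≥ 2`. Up to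
swapping `G` and `N`, these are the coprime pairs with `N < -1` and `1 < G` that have a positive
Størmer index. -/
structure IsCubicException (G N : ℤ) : Prop where
  nine_dvd : 9 ∣ oddPowCoeff G N 1
  exists_dvd_pow : ∃ n, oddPowCoeff G N 1 ∣ 3 ^ n
  isUnit : IsUnit (oddPowCoeff N G 1)

variable {G N : ℤ}

lemma IsCubicException.three_dvd (h : IsCubicException G N) : 3 ∣ G := by
  have := h.nine_dvd
  rw [oddPowCoeff_one] at this
  omega

lemma IsCubicException.not_nine_dvd (h : IsCubicException G N) : ¬ 9 ∣ G := by
  obtain ⟨h9, -, hunit⟩ := h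
  rw [oddPowCoeff_one] at h9 hunit
  rcases Int.isUnit_iff.1 hunit with h | h <;> omega

lemma IsCubicException.nine_dvd_mul_sq (h : IsCubicException G N) : 9 ∣ G * oddPowCoeff G N 1 ^ 2 :=
  (h.nine_dvd.trans (dvd_pow_self _ two_ne_zero)).mul_left _

lemma IsCubicException.neg (h : IsCubicException G N) : IsCubicException (-G) (-N) := by
  have odd (x y : ℤ) : oddPowCoeff (-x) (-y) 1 = -oddPowCoeff x y 1 := by
    simp only [oddPowCoeff_one]; ring
  obtain ⟨h9, hpow, hunit⟩ := h
  constructor <;> simpa only [odd, neg_dvd, dvd_neg, IsUnit.neg_iff]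

lemma not_isCubicException_of_nine_dvd (hGN : IsCoprime G N) (h9 : 9 ∣ G) :
    ¬ IsCubicException G N ∧ ¬ IsCubicException N G := by
  refine ⟨fun h ↦ h.not_nine_dvd h9, fun h ↦ ?_⟩
  have : IsUnit (3 : ℤ) := hGN.isUnit_of_dvd' (by omega) h.three_dvd
  norm_num [Int.isUnit_iff] at this

lemma isCubicException_of_isUnit (hG : G ≠ 0) (hU : ∃ n, oddPowCoeff G N 1 ∣ 3 ^ n)
    (hV : IsUnit (oddPowCoeff N G 1)) : IsCubicException G N := by
  refine ⟨?_, hU, hV⟩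
  obtain ⟨n, hn⟩ := hU
  obtain ⟨i, -, hi⟩ := (dvd_prime_pow Int.prime_three n).1 hn
  rw [Int.associated_iff] at hi
  rw [oddPowCoeff_one] at hi hV ⊢
  rw [Int.isUnit_iff] at hV
  match i with
  | 0 => omega
  | 1 => omega
  | i + 2 => rw [pow_add] at hi; omega

/-- A binomial expansion modulo `(2 * k + 1) ^ 2`: the cubic term is divisible by the prime
`2 * k + 1` twice as soon as `3 < 2 * k + 1`. -/
lemma not_sq_dvd_oddPowCoeff {k : ℕ} (hGN : IsCoprime G N) (hq : (2 * k + 1).Prime) (hk : 2 ≤ k)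
    (hqG : (2 * k + 1 : ℤ) ∣ G) : ¬ (2 * k + 1 : ℤ) ^ 2 ∣ oddPowCoeff G N k := by
  intro hsq
  have hprime : Prime (2 * k + 1 : ℤ) := by exact_mod_cast Nat.prime_iff_prime_int.1 hq
  have hchoose : (2 * k + 1 : ℤ) ∣ (2 * k + 1).choose 3 := by
    exact_mod_cast hq.dvd_choose_self three_ne_zero (by omega)
  obtain ⟨k, rfl⟩ : ∃ l, k = l + 1 := ⟨k - 1, by omega⟩
  set q : ℤ := 2 * (k + 1 : ℕ) + 1 with hqdef
  have expansion := ((pow_dvd_pow_of_dvd hqG 2).trans (sq_dvd_oddPowCoeff_sub G N k).1)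
  have cubic_term : q ^ 2 ∣ (2 * k + 3).choose 3 * G * N ^ k := by
    rw [sq]; exact (mul_dvd_mul hchoose hqG).mul_right _
  have linear_term : q * q ∣ q * N ^ (k + 1) := by
    have hq3 : (2 * k + 3 : ℤ) = q := by rw [hqdef]; push_cast; ring
    rwa [dvd_sub_right hsq, dvd_add_left cubic_term, sq, hq3] at expansion
  have hqN : q ∣ N := hprime.dvd_of_dvd_pow ((mul_dvd_mul_iff_left hprime.ne_zero).1 linear_term)
  exact hprime.not_isUnit (hGN.isUnit_of_dvd' hqG hqN)

lemma IsStormerIndex.dvd_two_mul_add_one {k : ℕ} (hGN : IsCoprime G N) (hq : (2 * k + 1).Prime)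
    (hk : 2 ≤ k) (h : IsStormerIndex G N k) : oddPowCoeff G N k ∣ 2 * k + 1 := by
  have hprime : Prime (2 * k + 1 : ℤ) := by exact_mod_cast Nat.prime_iff_prime_int.1 hq
  obtain ⟨n, hn⟩ := h.exists_dvd_pow hGN
  obtain ⟨i, -, hi⟩ := (dvd_prime_pow hprime n).1 hn
  obtain ⟨m, hm⟩ := h.1
  have hi1 : i ≤ 1 := by
    by_contra! hi2
    have hsq : (2 * k + 1 : ℤ) ^ 2 ∣ oddPowCoeff G N k := (pow_dvd_pow _ hi2).trans hi.symm.dvd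
    have hqG : (2 * k + 1 : ℤ) ∣ G :=
      hprime.dvd_of_dvd_pow ((dvd_pow_self _ two_ne_zero).trans (hsq.trans hm))
    exact not_sq_dvd_oddPowCoeff hGN hq hk hqG hsq
  simpa using hi.dvd.trans (pow_dvd_pow _ hi1)

lemma not_oddPowCoeff_dvd_two_mul_add_one {k : ℕ} (hG : 1 < G) (hN : N < -1) (hk : k ≠ 0)
    (hU : oddPowCoeff G N k ∣ 2 * k + 1) : ¬ oddPowCoeff N G k ∣ 2 * k + 1 := by
  intro hV
  have sq_le {x : ℤ} (hx : x ∣ 2 * k + 1) : x ^ 2 ≤ (2 * k + 1) ^ 2 :=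
    Int.le_of_dvd (by positivity) (pow_dvd_pow_of_dvd hx 2)
  have norm_le : (G - N) * ((G - N) ^ k) ^ 2 ≤ (G - N) * (2 * k + 1) ^ 2 := calc
    (G - N) * ((G - N) ^ k) ^ 2 = G * oddPowCoeff G N k ^ 2 + -N * oddPowCoeff N G k ^ 2 := by
      linear_combination -(mul_oddPowCoeff_sq_sub G N k)
    _ ≤ G * (2 * k + 1) ^ 2 + -N * (2 * k + 1) ^ 2 :=
      add_le_add (mul_le_mul_of_nonneg_left (sq_le hU) (by omega))
        (mul_le_mul_of_nonneg_left (sq_le hV) (by omega))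
    _ = (G - N) * (2 * k + 1) ^ 2 := by ring
  have pow_le : (G - N) ^ k ≤ 2 * k + 1 :=
    le_of_sq_le_sq (le_of_mul_le_mul_left norm_le (by omega)) (by positivity)
  have bernoulli : 1 + (k : ℤ) * 3 ≤ 4 ^ k := one_add_mul_le_pow (by norm_num) k
  have four_pow_le : (4 : ℤ) ^ k ≤ (G - N) ^ k := pow_le_pow_left₀ (by norm_num) (by omega) k
  omega

lemma IsStormerIndex.eq_one_of_prime {k : ℕ} (hG : 1 < G) (hN : N < -1) (hGN : IsCoprime G N)
    (hq : (2 * k + 1).Prime) (h : IsStormerIndex G N k) :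
    k = 1 ∧ (IsCubicException G N ∨ IsCubicException N G) := by
  obtain rfl : k = 1 := by
    by_contra hk1
    have hk : 2 ≤ k := by have := hq.two_le; omega
    exact not_oddPowCoeff_dvd_two_mul_add_one hG hN (by omega)
      (h.dvd_two_mul_add_one hGN hq hk) (h.symm.dvd_two_mul_add_one hGN.symm hq hk)
  refine ⟨rfl, ?_⟩
  have three_pow {x : ℤ} (hx : ∃ n, x ∣ (2 * (1 : ℕ) + 1) ^ n) : ∃ n, x ∣ 3 ^ n := by simpa using hx
  have hU := three_pow (h.exists_dvd_pow hGN)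
  have hV := three_pow (h.symm.exists_dvd_pow hGN.symm)
  have isUnit_of_not_dvd {x : ℤ} (hx : ∃ n, x ∣ 3 ^ n) (h3 : ¬ 3 ∣ x) : IsUnit x := by
    obtain ⟨n, hn⟩ := hx
    exact ((Int.prime_three.coprime_iff_not_dvd.2 h3).pow_left).isUnit_of_dvd' hn dvd_rfl
  by_cases h3V : 3 ∣ oddPowCoeff N G 1
  · right
    refine isCubicException_of_isUnit (by omega) hV (isUnit_of_not_dvd hU fun h3U ↦ ?_)
    obtain ⟨⟨m, hm⟩, ⟨n, hn⟩⟩ := h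
    have := hGN.isUnit_of_dvd' (Int.prime_three.dvd_of_dvd_pow (h3U.trans hm))
      (Int.prime_three.dvd_of_dvd_pow (h3V.trans hn))
    exact Int.prime_three.not_isUnit this
  · exact .inl (isCubicException_of_isUnit (by omega) hU (isUnit_of_not_dvd hV h3V))

lemma IsStormerIndex.exists_three_mul {K : ℕ} (hG : 1 < G) (hN : N < -1) (hGN : IsCoprime G N)
    (hK : K ≠ 0) (h : IsStormerIndex G N K) :
    ∃ j, 2 * K + 1 = (2 * j + 1) * (2 * 1 + 1) ∧
      (IsCubicException (G * oddPowCoeff G N j ^ 2) (N * oddPowCoeff N G j ^ 2) ∨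
        IsCubicException (N * oddPowCoeff N G j ^ 2) (G * oddPowCoeff G N j ^ 2)) := by
  have hq : (2 * K + 1).minFac.Prime := Nat.minFac_prime (by omega)
  obtain ⟨m, hm⟩ := Nat.minFac_dvd (2 * K + 1)
  obtain ⟨⟨k, hk⟩, ⟨j, rfl⟩⟩ := Nat.odd_mul.1 (hm ▸ odd_two_mul_add_one K)
  rw [hk] at hq hm
  rw [mul_comm (2 * k + 1)] at hm
  have hj := h.left_of_mul two_ne_zero (by omega) (by omega) hm
  have hG' : 1 < G * oddPowCoeff G N j ^ 2 :=
    one_lt_mul_sq hG (hj.oddPowCoeff_ne_zero (by omega))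
  have hN' : 1 < -N * oddPowCoeff N G j ^ 2 :=
    one_lt_mul_sq (by omega) (hj.symm.oddPowCoeff_ne_zero (by omega))
  obtain ⟨rfl, hexc⟩ := (h.right_of_mul two_ne_zero (by omega) (by omega) hm).eq_one_of_prime hG'
    (by linarith) (hj.isCoprime_mul_sq hGN) hq
  exact ⟨j, hm, hexc⟩

/-- If `3` splits off twice, the first factor makes one radicand divisible by `9`, which the second
factor does not allow. -/
lemma IsStormerIndex.eq_one {K : ℕ} (hG : 1 < G) (hN : N < -1) (hGN : IsCoprime G N)
    (hK : K ≠ 0) (h : IsStormerIndex G N K) :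
    K = 1 ∧ (IsCubicException G N ∨ IsCubicException N G) := by
  have hG0 : G ≠ 0 := by omega
  have hN0 : N ≠ 0 := by omega
  obtain ⟨j, hj, hexc⟩ := h.exists_three_mul hG hN hGN hK
  have hStormer := h.left_of_mul two_ne_zero hG0 hN0 hj
  obtain rfl | hj0 := eq_or_ne j 0
  · exact ⟨by omega, by simpa using hexc⟩
  exfalso
  obtain ⟨l, hl, hexc'⟩ := hStormer.exists_three_mul hG hN hGN hj0
  have hcop := hStormer.isCoprime_mul_sq hGN
  rw [oddPowCoeff_comp two_ne_zero hG0 N hl, oddPowCoeff_comp two_ne_zero hN0 G hl] at hcop hexc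
  simp only [mul_pow, ← mul_assoc] at hcop hexc
  rcases hexc' with h' | h'
  · have := not_isCubicException_of_nine_dvd hcop h'.nine_dvd_mul_sq
    tauto
  · have := not_isCubicException_of_nine_dvd hcop.symm h'.nine_dvd_mul_sq
    tauto

end Cubic

section PrimitiveRep

/-- `(u, v)` is a representation of `c ^ z` by the form `A * u ^ 2 + B * v ^ 2` that is not
divisible by `c`; when `c` is prime and `z ≠ 0`, this is a primitive representation. -/
structure IsPrimitiveRep {R : Type*} [CommRing R] (A B c : R) (z : ℕ) (u v : R) : Prop where
  eq : A * u ^ 2 + B * v ^ 2 = c ^ z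
  not_dvd : ¬ (c ∣ u ∧ c ∣ v)

variable {R : Type*} [CommRing R] {A B c u v : R} {z : ℕ}

lemma IsPrimitiveRep.not_dvd_left (hc : Prime c) (hB : ¬ c ∣ B) (hz : z ≠ 0)
    (h : IsPrimitiveRep A B c z u v) : ¬ c ∣ u := by
  intro hu
  have hsum : c ∣ A * u ^ 2 + B * v ^ 2 := h.eq ▸ dvd_pow_self c hz
  have hBv : c ∣ B * v ^ 2 :=
    (dvd_add_right ((dvd_pow hu two_ne_zero).mul_left A)).1 hsum
  exact h.not_dvd ⟨hu, hc.dvd_of_dvd_pow ((hc.dvd_or_dvd hBv).resolve_left hB)⟩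

/-- `(u√A + v√-B) ^ 2 = (A * u ^ 2 - B * v ^ 2) + 2 * u * v * √(-A * B)`. -/
lemma IsPrimitiveRep.sq (hc : Prime c) (h2A : ¬ c ∣ 2 * A) (hB : ¬ c ∣ B) (hz : z ≠ 0)
    (h : IsPrimitiveRep A B c z u v) :
    IsPrimitiveRep 1 (A * B) c (z + z) (A * u ^ 2 - B * v ^ 2) (2 * u * v) := by
  refine ⟨by rw [pow_add, ← h.eq]; ring, fun ⟨hdiff, _⟩ ↦ ?_⟩
  have hAu : c ∣ 2 * A * u ^ 2 := by
    rw [show 2 * A * u ^ 2 = (A * u ^ 2 - B * v ^ 2) + (A * u ^ 2 + B * v ^ 2) by ring, h.eq]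
    exact hdiff.add (dvd_pow_self c hz)
  exact h.not_dvd_left hc hB hz (hc.dvd_of_dvd_pow ((hc.dvd_or_dvd hAu).resolve_left h2A))

/-- The sign of `y` is chosen so that the prime above `c` dividing both representations is the same
one. -/
lemma IsPrimitiveRep.exists_sq_eq_sq_and_pow_dvd [IsDomain R] (hc : Prime c) {e f g h x y r s : R}
    {w i : ℕ} (hcoef : ¬ c ∣ 2 * e * f * g * h) (hx : IsPrimitiveRep (e * f) (g * h) c (w + i) x y)
    (hr : IsPrimitiveRep (e * g) (f * h) c w r s) :
    ∃ y', y' ^ 2 = y ^ 2 ∧ c ^ w ∣ e * x * r - h * y' * s := by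
  simp only [hc.dvd_mul, not_or] at hcoef
  obtain ⟨⟨⟨⟨h2, he⟩, hf⟩, hg⟩, hh⟩ := hcoef
  obtain rfl | hw := eq_or_ne w 0
  · exact ⟨y, rfl, by simp⟩
  have not_dvd_sum : ¬ c ∣ 2 * (e * x * r) := by
    simp only [hc.dvd_mul, not_or]
    exact ⟨h2, ⟨he, hx.not_dvd_left hc (by simp [hc.dvd_mul, hg, hh]) (by omega)⟩,
      hr.not_dvd_left hc (by simp [hc.dvd_mul, hf, hh]) hw⟩
  have pow_dvd : c ^ w ∣ (e * x * r - h * y * s) * (e * x * r + h * y * s) := by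
    refine hc.pow_dvd_of_dvd_mul_left w (show ¬ c ∣ f * g by simp [hc.dvd_mul, hf, hg]) ?_
    refine ⟨c ^ i * (e * g * r ^ 2) - g * h * y ^ 2, ?_⟩
    have hxeq := hx.eq
    rw [pow_add] at hxeq
    linear_combination e * g * r ^ 2 * hxeq - g * h * y ^ 2 * hr.eq
  by_cases hminus : c ∣ e * x * r - h * y * s
  · have hplus : ¬ c ∣ e * x * r + h * y * s := fun hplus ↦ not_dvd_sum <| by
      convert hminus.add hplus using 1; ring
    exact ⟨y, rfl, hc.pow_dvd_of_dvd_mul_right w hplus pow_dvd⟩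
  · refine ⟨-y, neg_sq y, ?_⟩
    convert hc.pow_dvd_of_dvd_mul_left w hminus pow_dvd using 1; ring

/-- `(x√(ef) + y'√(-gh)) = (r√(eg) + s√(-fh)) * (P√(fg) + Q√(-eh))` up to the sign of `s`. -/
lemma IsPrimitiveRep.exists_factor [IsDomain R] (hc : Prime c) {e f g h x y r s : R} {w i : ℕ}
    (hcoef : ¬ c ∣ 2 * e * f * g * h) (hx : IsPrimitiveRep (e * f) (g * h) c (w + i) x y)
    (hr : IsPrimitiveRep (e * g) (f * h) c w r s) :
    ∃ y' P Q, y' ^ 2 = y ^ 2 ∧ x = g * r * P + h * s * Q ∧ y' = e * r * Q - f * s * P ∧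
      IsPrimitiveRep (f * g) (e * h) c i P Q := by
  obtain ⟨y', hy', P, hP⟩ := hx.exists_sq_eq_sq_and_pow_dvd hc hcoef hr
  have hcw : c ^ w ≠ 0 := pow_ne_zero w hc.ne_zero
  have dvd_conj : c ^ w ∣ f * x * s + g * y' * r := by
    obtain rfl | hw := eq_or_ne w 0
    · simp
    simp only [hc.dvd_mul, not_or] at hcoef
    obtain ⟨⟨⟨⟨-, he⟩, hf⟩, -⟩, hh⟩ := hcoef
    have hcr := hr.not_dvd_left hc (by simp [hc.dvd_mul, hf, hh]) hw
    refine hc.pow_dvd_of_dvd_mul_left w (show ¬ c ∣ e * r by simp [hc.dvd_mul, he, hcr]) ?_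
    exact ⟨f * s * P + y', by linear_combination f * s * hP + y' * hr.eq⟩
  obtain ⟨Q, hQ⟩ := dvd_conj
  have hxPQ : x = g * r * P + h * s * Q := mul_left_cancel₀ hcw <| by
    linear_combination -x * hr.eq + g * r * hP + h * s * hQ
  have hyPQ : y' = e * r * Q - f * s * P := mul_left_cancel₀ hcw <| by
    linear_combination -y' * hr.eq + e * r * hQ - f * s * hP
  refine ⟨y', P, Q, hy', hxPQ, hyPQ, mul_left_cancel₀ hcw ?_,
    fun ⟨hcP, hcQ⟩ ↦ hx.not_dvd ⟨?_, ?_⟩⟩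
  · rw [← pow_add, ← hx.eq, ← hr.eq, ← hy', hyPQ, hxPQ]; ring
  · rw [hxPQ]; exact (hcP.mul_left _).add (hcQ.mul_left _)
  · refine hc.dvd_of_dvd_pow (n := 2) ?_
    rw [← hy', hyPQ]
    exact dvd_pow ((hcQ.mul_left _).sub (hcP.mul_left _)) two_ne_zero

end PrimitiveRep

section MinimalRep

variable {A B c u v : ℤ} {z : ℕ}

lemma IsPrimitiveRep.ne_zero (hA : 1 < A) (hB : 1 < B) (h : IsPrimitiveRep A B c z u v) :
    z ≠ 0 := by
  rintro rfl
  have hsum : A * u ^ 2 + B * v ^ 2 = 1 := by simpa using h.eq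
  obtain rfl | hu := eq_or_ne u 0
  · obtain rfl | hv := eq_or_ne v 0
    · simp at hsum
    · have := one_lt_mul_sq hB hv
      omega
  · have hAu := one_lt_mul_sq hA hu
    have hBv : 0 ≤ B * v ^ 2 := by positivity
    omega

lemma IsPrimitiveRep.sq_eq_sq {u' v' : ℤ} (hAB : 1 < A * B) (hc : Prime c) (hcAB : ¬ c ∣ 2 * A * B)
    (h : IsPrimitiveRep A B c z u v) (h' : IsPrimitiveRep A B c z u' v') :
    u ^ 2 = u' ^ 2 ∧ v ^ 2 = v' ^ 2 := by
  obtain ⟨w, P, Q, hw, hu, hv, hPQ⟩ := IsPrimitiveRep.exists_factor hc (e := A) (f := 1) (g := 1)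
    (h := B) (i := 0) (by simpa using hcAB) (by simpa using h) (by simpa using h')
  have hsum : P ^ 2 + A * B * Q ^ 2 = 1 := by simpa using hPQ.eq
  obtain rfl : Q = 0 := by
    by_contra hQ
    have := one_lt_mul_sq hAB hQ
    have := sq_nonneg P
    omega
  have hP : P ^ 2 = 1 := by simpa using hsum
  rw [← hw, hu, hv]
  exact ⟨by linear_combination u' ^ 2 * hP, by linear_combination v' ^ 2 * hP⟩

/-- A primitive representation `(u, v)` of a power of `c` with the least possible exponent. -/
structure IsMinimalRep (A B c : ℤ) (z : ℕ) (u v : ℤ) : Prop extends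
    IsPrimitiveRep A B c z u v where
  le_of_isPrimitiveRep : ∀ {z' u' v'}, IsPrimitiveRep A B c z' u' v' → z ≤ z'

variable {u₀ v₀ : ℤ} {z₀ : ℕ}

lemma IsPrimitiveRep.exists_isMinimalRep (h : IsPrimitiveRep A B c z u v) :
    ∃ z₀ u₀ v₀, IsMinimalRep A B c z₀ u₀ v₀ := by
  classical
  have hex : ∃ z u v, IsPrimitiveRep A B c z u v := ⟨z, u, v, h⟩
  obtain ⟨u₀, v₀, h₀⟩ := Nat.find_spec hex
  exact ⟨_, u₀, v₀, h₀, fun h' ↦ Nat.find_min' hex ⟨_, _, h'⟩⟩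

lemma IsMinimalRep.eq_or_add_self_lt (hA : 1 < A) (hB : 1 < B) (hc : Prime c)
    (hcAB : ¬ c ∣ 2 * A * B) (h₀ : IsMinimalRep A B c z₀ u₀ v₀)
    (h : IsPrimitiveRep A B c z u v) : z = z₀ ∨ z₀ + z₀ < z := by
  by_contra! ⟨hne, hle⟩
  obtain ⟨i, hi⟩ := Nat.exists_eq_add_of_le hle
  have hsq := h₀.sq hc (fun h ↦ hcAB (h.mul_right B)) (fun h ↦ hcAB (h.mul_left _))
    (h₀.ne_zero hA hB)
  obtain ⟨-, P, Q, -, -, -, hPQ⟩ := IsPrimitiveRep.exists_factor hc (e := 1) (f := 1)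
    (g := A) (h := B) (w := z) (i := i) (by simpa using hcAB) (by simpa [← hi] using hsq)
    (by simpa using h)
  have hPQ : IsPrimitiveRep A B c i P Q := by simpa using hPQ
  have := h₀.le_of_isPrimitiveRep hPQ
  have := h₀.le_of_isPrimitiveRep h
  omega

/-- Every primitive representation `u√A + v√-B` is an odd power of the minimal one up to signs. -/
theorem IsMinimalRep.exists_sq_eq_oddPowCoeff (hA : 1 < A) (hB : 1 < B) (hc : Prime c)
    (hcAB : ¬ c ∣ 2 * A * B) (h₀ : IsMinimalRep A B c z₀ u₀ v₀)
    (h : IsPrimitiveRep A B c z u v) :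
    ∃ k, u ^ 2 = (u₀ * oddPowCoeff (A * u₀ ^ 2) (-B * v₀ ^ 2) k) ^ 2 ∧
      v ^ 2 = (v₀ * oddPowCoeff (-B * v₀ ^ 2) (A * u₀ ^ 2) k) ^ 2 := by
  induction z using Nat.strong_induction_on generalizing u v with
  | _ z ih =>
  obtain rfl | hlt := h₀.eq_or_add_self_lt hA hB hc hcAB h
  · have := h.sq_eq_sq (by nlinarith) hc hcAB h₀.toIsPrimitiveRep
    exact ⟨0, by simpa using this⟩
  obtain ⟨i, rfl⟩ := Nat.exists_eq_add_of_le hlt.le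
  have hcB : ¬ c ∣ B := fun h ↦ hcAB (h.mul_left _)
  have hz₀ := h₀.ne_zero hA hB
  have hsq := h₀.sq hc (fun h ↦ hcAB (h.mul_right B)) hcB hz₀
  obtain ⟨v', P, Q, hv', hu, hv, hPQ⟩ := IsPrimitiveRep.exists_factor hc (e := 1) (f := A) (g := 1)
    (h := B) (i := i) (by simpa using hcAB) (by simpa using h) (by simpa using hsq)
  simp only [mul_one, one_mul] at hu hv hPQ
  obtain ⟨k, hP, hQ⟩ := ih i (by omega) hPQ
  have norm : A * u₀ ^ 2 - -B * v₀ ^ 2 = c ^ z₀ := by rw [← h₀.eq]; ring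
  have hdvd := (dvd_pow_self c hz₀).trans
    (norm ▸ sub_dvd_add_mul_oddPowCoeff_sub (A * u₀ ^ 2) (-B * v₀ ^ 2) k)
  have hcu : ¬ c ∣ u := h.not_dvd_left hc hcB (by omega)
  rw [← hv']
  refine ⟨k + 1, ?_⟩
  rw [oddPowCoeff_succ, oddPowCoeff_succ]
  -- If `P` and `Q` have the same sign, then multiplying by the square cancels the minimal
  -- representation, and `(u, v)` is not primitive.
  rcases sq_eq_sq_iff_eq_or_eq_neg.1 hP with rfl | rfl <;>
    rcases sq_eq_sq_iff_eq_or_eq_neg.1 hQ with rfl | rfl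
  · exact absurd ((hdvd.mul_left u₀).trans (dvd_of_eq (by rw [hu]; ring))) hcu
  · exact ⟨by rw [hu]; ring, by rw [hv]; ring⟩
  · exact ⟨by rw [hu]; ring, by rw [hv]; ring⟩
  · exact absurd ((hdvd.mul_left (-u₀)).trans (dvd_of_eq (by rw [hu]; ring))) hcu

end MinimalRep

section ExponentialEquation

lemma isPrimitiveRep_of_pow_add_pow_eq {R : Type*} [CommRing R] {a b c : R} (hc : Prime c)
    (hca : ¬ c ∣ a) {p q m n z : ℕ} (h : a ^ (p + 2 * m) + b ^ (q + 2 * n) = c ^ z) :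
    IsPrimitiveRep (a ^ p) (b ^ q) c z (a ^ m) (b ^ n) :=
  ⟨by rw [← h]; ring, fun ⟨hdvd, _⟩ ↦ hca (hc.dvd_of_dvd_pow hdvd)⟩

/-- The exponents `p + 2 * m` and `q + 2 * n` run through a parity class. -/
lemma IsMinimalRep.exists_isStormerIndex {a b c u₀ v₀ : ℤ} {p q z₀ m n z : ℕ} (ha : 1 < a)
    (hb : 1 < b) (hc : Prime c) (hcab : ¬ c ∣ 2 * a * b) (hp : p ≠ 0) (hq : q ≠ 0)
    (h₀ : IsMinimalRep (a ^ p) (b ^ q) c z₀ u₀ v₀)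
    (h : a ^ (p + 2 * m) + b ^ (q + 2 * n) = c ^ z) :
    ∃ k, IsStormerIndex (a ^ p * u₀ ^ 2) (-b ^ q * v₀ ^ 2) k ∧
      a ^ (p + 2 * m) = a ^ p * u₀ ^ 2 * oddPowCoeff (a ^ p * u₀ ^ 2) (-b ^ q * v₀ ^ 2) k ^ 2 ∧
      b ^ (q + 2 * n) =
        -(-b ^ q * v₀ ^ 2) * oddPowCoeff (-b ^ q * v₀ ^ 2) (a ^ p * u₀ ^ 2) k ^ 2 := by
  have hcpow : ¬ c ∣ 2 * a ^ p * b ^ q := by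
    simp only [hc.dvd_mul, not_or] at hcab ⊢
    exact ⟨⟨hcab.1.1, mt hc.dvd_of_dvd_pow hcab.1.2⟩, mt hc.dvd_of_dvd_pow hcab.2⟩
  have hca : ¬ c ∣ a := fun hdvd ↦ hcab ((hdvd.mul_left 2).mul_right b)
  obtain ⟨k, hu, hv⟩ := h₀.exists_sq_eq_oddPowCoeff (one_lt_pow₀ ha hp) (one_lt_pow₀ hb hq) hc hcpow
    (isPrimitiveRep_of_pow_add_pow_eq hc hca h)
  set G := a ^ p * u₀ ^ 2
  set N := -b ^ q * v₀ ^ 2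
  have haU : a ^ (p + 2 * m) = G * oddPowCoeff G N k ^ 2 := by linear_combination a ^ p * hu
  have hbV : b ^ (q + 2 * n) = -N * oddPowCoeff N G k ^ 2 := by linear_combination b ^ q * hv
  have hU : oddPowCoeff G N k ∣ a ^ (p + 2 * m) := haU ▸ (dvd_pow_self _ two_ne_zero).mul_left G
  have hV : oddPowCoeff N G k ∣ b ^ (q + 2 * n) := hbV ▸ (dvd_pow_self _ two_ne_zero).mul_left _
  have haG : a ∣ G := (dvd_pow_self a hp).mul_right _
  have hbN : b ∣ N := ((dvd_pow_self b hq).neg_right).mul_right _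
  exact ⟨k, ⟨⟨_, hU.trans (pow_dvd_pow_of_dvd haG _)⟩, _, hV.trans (pow_dvd_pow_of_dvd hbN _)⟩,
    haU, hbV⟩

theorem exists_generator_of_parity_class {a b c : ℤ} {p q m₀ n₀ z₀ : ℕ} (ha : 1 < a) (hb : 1 < b)
    (hab : IsCoprime a b) (hc : Prime c) (hcab : ¬ c ∣ 2 * a * b) (hp : p ≠ 0) (hq : q ≠ 0)
    (h₀ : a ^ (p + 2 * m₀) + b ^ (q + 2 * n₀) = c ^ z₀) :
    ∃ G N, 1 < G ∧ N < -1 ∧ IsCoprime G N ∧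
      ∀ {m n z}, a ^ (p + 2 * m) + b ^ (q + 2 * n) = c ^ z →
        ∃ k, IsStormerIndex G N k ∧ a ^ (p + 2 * m) = G * oddPowCoeff G N k ^ 2 ∧
          b ^ (q + 2 * n) = -N * oddPowCoeff N G k ^ 2 := by
  have hca : ¬ c ∣ a := fun hdvd ↦ hcab ((hdvd.mul_left 2).mul_right b)
  obtain ⟨w, u, v, hmin⟩ :=
    (isPrimitiveRep_of_pow_add_pow_eq hc hca h₀).exists_isMinimalRep
  obtain ⟨k, -, hG, hN⟩ := hmin.exists_isStormerIndex ha hb hc hcab hp hq h₀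
  have ha₀ : a ^ (p + 2 * m₀) ≠ 0 := by positivity
  have hb₀ : b ^ (q + 2 * n₀) ≠ 0 := by positivity
  have hu : u ≠ 0 := by
    rintro rfl
    simp [hG] at ha₀
  have hv : v ≠ 0 := by
    rintro rfl
    simp [hN] at hb₀
  have hN1 := one_lt_mul_sq (one_lt_pow₀ hb hq) hv
  refine ⟨a ^ p * u ^ 2, -b ^ q * v ^ 2, one_lt_mul_sq (one_lt_pow₀ ha hp) hu, by linarith, ?_,
    fun h ↦ hmin.exists_isStormerIndex ha hb hc hcab hp hq h⟩
  exact (hab.pow.of_isCoprime_of_dvd_left ⟨_, hG⟩).of_isCoprime_of_dvd_right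
    (neg_dvd.1 ⟨_, hN⟩)

lemma IsCubicException.eq_ten {H : ℤ} (h : IsCubicException 3 (-H)) : H = 10 := by
  have hV := h.isUnit
  obtain ⟨n, hn⟩ := h.exists_dvd_pow
  rw [oddPowCoeff_one] at hV hn
  obtain h10 | rfl : H = 10 ∨ H = 8 := by
    rcases Int.isUnit_iff.1 hV with h | h <;> omega
  · exact h10
  · have : (7 : ℤ) ∣ 3 ^ n := dvd_trans (by norm_num) hn
    have := (show Prime (7 : ℤ) by norm_num).dvd_of_dvd_pow this
    norm_num at this

lemma dvd_of_pow_eq_mul {R : Type*} [CommRing R] [IsDomain R] {a b : R} {n : ℕ} (ha : a ≠ 0)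
    (hb : ¬ IsUnit b) (h : a ^ n = a * b) : a ∣ b := by
  match n with
  | 0 => exact absurd (.of_mul_eq_one_right a (by rw [← h, pow_zero])) hb
  | 1 =>
    have hb1 : b = 1 := mul_left_cancel₀ ha (by rw [← h, pow_one, mul_one])
    exact absurd (hb1 ▸ isUnit_one) hb
  | m + 2 => exact ⟨a ^ m, mul_left_cancel₀ ha (by rw [← h]; ring)⟩

lemma IsCubicException.eq_three {a x x' : ℕ} {N : ℤ} (h : IsCubicException ((a : ℤ) ^ x) N)
    (ha : (a : ℤ) ^ x' = a ^ x * oddPowCoeff ((a : ℤ) ^ x) N 1 ^ 2) : x = 1 ∧ a = 3 := by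
  have h3 : (3 : ℤ) ∣ a := Int.prime_three.dvd_of_dvd_pow h.three_dvd
  have hx0 : x ≠ 0 := by
    rintro rfl
    have := h.three_dvd
    norm_num at this
  have hx2 : x < 2 := by
    by_contra! hx
    exact h.not_nine_dvd ((pow_dvd_pow_of_dvd h3 2).trans (pow_dvd_pow _ hx))
  obtain rfl : x = 1 := by omega
  refine ⟨rfl, ?_⟩
  rw [pow_one] at h ha
  set U := oddPowCoeff (a : ℤ) N 1
  have ha0 : (a : ℤ) ≠ 0 := fun ha0 ↦ h.not_nine_dvd (ha0 ▸ dvd_zero 9)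
  have hU : ¬ IsUnit (U ^ 2) := fun hunit ↦
    Int.prime_three.not_isUnit <| isUnit_of_dvd_unit
      ((show (3 : ℤ) ∣ 9 by norm_num).trans (h.nine_dvd.trans (dvd_pow_self U two_ne_zero))) hunit
  have haU : (a : ℤ) ∣ U ^ 2 := dvd_of_pow_eq_mul ha0 hU ha
  obtain ⟨n, hn⟩ := h.exists_dvd_pow
  have ha_dvd : a ∣ 3 ^ (n * 2) := by
    rw [pow_mul]
    exact_mod_cast haU.trans (pow_dvd_pow_of_dvd hn 2)
  obtain ⟨i, -, rfl⟩ := (Nat.dvd_prime_pow Nat.prime_three).1 ha_dvd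
  have hnot := h.not_nine_dvd
  match i with
  | 0 => norm_num at h3
  | 1 => rfl
  | i + 2 => exact absurd ⟨3 ^ i, by push_cast; ring⟩ hnot

lemma IsCubicException.eq_three_ten_thirteen {a b c x y z x' : ℕ} (hc : c.Prime)
    (heq : a ^ x + b ^ y = c ^ z) (h : IsCubicException ((a : ℤ) ^ x) (-(b : ℤ) ^ y))
    (ha : (a : ℤ) ^ x' = a ^ x * oddPowCoeff ((a : ℤ) ^ x) (-(b : ℤ) ^ y) 1 ^ 2) :
    (a, b, c) = (3, 10, 13) := by
  obtain ⟨rfl, rfl⟩ := h.eq_three ha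
  have hb : b ^ y = 10 := by
    have : (b : ℤ) ^ y = 10 := IsCubicException.eq_ten (by simpa using h)
    exact_mod_cast this
  obtain rfl : y = 1 := by
    have hsq : Squarefree (b ^ y) := by rw [hb]; decide +kernel
    refine ((Nat.squarefree_pow_iff ?_ ?_).1 hsq).2
    · rintro rfl
      simp at hb
    · rintro rfl
      simp at hb
  rw [pow_one] at hb
  have h13 : 13 ∣ c ^ z := by rw [← heq, hb]; norm_num
  have prime13 : Nat.Prime 13 := by norm_num
  rw [hb, (Nat.prime_dvd_prime_iff_eq prime13 hc).1 (prime13.dvd_of_dvd_pow h13)]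

lemma eq_or_eq_of_isStormerIndex {a b c x y z x' y' k : ℕ} {G N : ℤ} (hG : 1 < G) (hN : N < -1)
    (hGN : IsCoprime G N) (hc : c.Prime) (heq : a ^ x + b ^ y = c ^ z) (haG : (a : ℤ) ^ x = G)
    (hbN : (b : ℤ) ^ y = -N) (hk : k ≠ 0) (h : IsStormerIndex G N k)
    (ha : (a : ℤ) ^ x' = G * oddPowCoeff G N k ^ 2)
    (hb : (b : ℤ) ^ y' = -N * oddPowCoeff N G k ^ 2) :
    (a, b, c) = (3, 10, 13) ∨ (a, b, c) = (10, 3, 13) := by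
  obtain ⟨rfl, hexc⟩ := h.eq_one hG hN hGN hk
  obtain rfl : N = -(b : ℤ) ^ y := by rw [hbN, neg_neg]
  subst haG
  rcases hexc with hexc | hexc
  · exact .inl (hexc.eq_three_ten_thirteen hc heq ha)
  · right
    have hexc' := hexc.neg
    rw [neg_neg] at hexc'
    have := hexc'.eq_three_ten_thirteen hc (x' := y') (by rw [← heq, add_comm]) (by
      simp only [oddPowCoeff_one] at hb ⊢
      linear_combination hb)
    simp only [Prod.mk.injEq] at this ⊢
    tauto

lemma exists_eq_add_two_mul {x₁ x₂ : ℕ} (h₁ : x₁ ≠ 0) (h₂ : x₂ ≠ 0) (h : x₁ % 2 = x₂ % 2) :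
    ∃ p m₁ m₂, p ≠ 0 ∧ x₁ = p + 2 * m₁ ∧ x₂ = p + 2 * m₂ :=
  ⟨2 - x₁ % 2, (x₁ - 1) / 2, (x₂ - 1) / 2, by omega, by omega, by omega⟩

end ExponentialEquation

/-- Lemma 2.1: for `c` an odd prime and `(a,b,c)` not `(3,10,13)` or `(10,3,13)`,
there is at most one solution of `a^x + b^y = c^z` in each parity class. -/
theorem stmt_6 (a b c : ℕ) (hab : Nat.Coprime a b) (hac : Nat.Coprime a c)
    (hbc : Nat.Coprime b c) (ha1 : 1 < a) (hb1 : 1 < b) (hc1 : 1 < c)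
    (hc : Nat.Prime c) (hcodd : Odd c)
    (h1 : (a, b, c) ≠ (3, 10, 13)) (h2 : (a, b, c) ≠ (10, 3, 13))
    (x₁ y₁ z₁ x₂ y₂ z₂ : ℕ)
    (hx₁ : 0 < x₁) (hy₁ : 0 < y₁) (hz₁ : 0 < z₁)
    (hx₂ : 0 < x₂) (hy₂ : 0 < y₂) (hz₂ : 0 < z₂)
    (heq₁ : a ^ x₁ + b ^ y₁ = c ^ z₁) (heq₂ : a ^ x₂ + b ^ y₂ = c ^ z₂)
    (hxpar : x₁ % 2 = x₂ % 2) (hypar : y₁ % 2 = y₂ % 2) :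
    (x₁, y₁, z₁) = (x₂, y₂, z₂) := by
  obtain ⟨p, m₁, m₂, hp, rfl, rfl⟩ := exists_eq_add_two_mul hx₁.ne' hx₂.ne' hxpar
  obtain ⟨q, n₁, n₂, hq, rfl, rfl⟩ := exists_eq_add_two_mul hy₁.ne' hy₂.ne' hypar
  have hcab : ¬ (c : ℤ) ∣ 2 * a * b := by
    exact_mod_cast hc.coprime_iff_not_dvd.1
      ((hcodd.coprime_two_right.mul_right hac.symm).mul_right hbc.symm)
  obtain ⟨G, N, hG, hN, hGN, hgen⟩ := exists_generator_of_parity_class (m₀ := m₁) (n₀ := n₁)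
    (mod_cast ha1) (mod_cast hb1) hab.isCoprime (Nat.prime_iff_prime_int.1 hc) hcab hp hq
    (mod_cast heq₁)
  obtain ⟨k₁, hk₁, ha₁, hb₁⟩ := hgen (mod_cast heq₁)
  obtain ⟨k₂, hk₂, ha₂, hb₂⟩ := hgen (mod_cast heq₂)
  obtain rfl : k₁ = k₂ := by
    obtain rfl | h₁ := eq_or_ne k₁ 0 <;> obtain rfl | h₂ := eq_or_ne k₂ 0
    · rfl
    · have := eq_or_eq_of_isStormerIndex hG hN hGN hc heq₁ (by simpa using ha₁)
        (by simpa using hb₁) h₂ hk₂ ha₂ hb₂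
      tauto
    · have := eq_or_eq_of_isStormerIndex hG hN hGN hc heq₂ (by simpa using ha₂)
        (by simpa using hb₂) h₁ hk₁ ha₁ hb₁
      tauto
    · rw [(hk₁.eq_one hG hN hGN h₁).1, (hk₂.eq_one hG hN hGN h₂).1]
  have hx := Nat.pow_right_injective ha1 (mod_cast ha₁.trans ha₂.symm)
  have hy := Nat.pow_right_injective hb1 (mod_cast hb₁.trans hb₂.symm)
  have hz := Nat.pow_right_injective hc1 (heq₁.symm.trans (hx ▸ hy ▸ heq₂))
  rw [hx, hy, hz]
end

section
/- Let $X$ and $n$ be positive integers with $X$ odd and $n > 1$. Then $|X^2 - 2^n| > 2^{0.26 n}$, unless $X^2 - 2^n = 1$ or $X^2 - 2^n = -7$. -/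
/-!
For even `n` the number `X ^ 2 - 2 ^ n` factors over the integers. For `n = 2 * m + 1`, a small
value of `|X ^ 2 - 2 ^ n|` would make `X` extremely close to `2 ^ m * √2`. For large `m` the
hypergeometric method excludes this. The Padé approximants `P / Q` of type `(17 * K, 5 * K)` to
`√t` at `t = 1`, evaluated at `t = 181 ^ 2 / 2 ^ 15`, approximate `√2 * 181 / 256` by
rationals; since `X` is odd, `X / 2 ^ m` is a different approximation, already by its 2-adic
valuation. Up to powers of two the coefficients of `P` and `Q` are integers with a large odd common
divisor, which is a lower bound for the resulting nonzero integer linear form in `P` and `Q`. A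
variant of Chebyshev's method, with weights found by linear programming, shows that this divisor is
at least `exp (2.765 * K)`, whereas the linear form is smaller.

For medium `m` it is enough to know, for a sequence of exponents `p` with ratios at most `1.4`,
that sixteen consecutive binary digits of `2 ^ p * √2` are neither all `0` nor all `1`.
-/

namespace SquarePowerGap

open Polynomial ArithmeticFunction
open scoped Nat Finset Chebyshev

section PadeApproximation

theorem succ_mul_choose_succ (r : ℝ) (k : ℕ) :
    (k + 1) * Ring.choose r (k + 1) = (r - k) * Ring.choose r k := by
  have hk := Ring.descPochhammer_eq_factorial_smul_choose r k
  have hsucc := Ring.descPochhammer_eq_factorial_smul_choose r (k + 1)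
  rw [descPochhammer_succ_right, smeval_mul, hk, smeval_sub, smeval_X, pow_one,
    smeval_natCast, pow_zero, nsmul_one, Nat.factorial_succ] at hsucc
  simp only [nsmul_eq_mul] at hsucc
  push_cast at hsucc
  refine mul_left_cancel₀ (Nat.cast_ne_zero.2 k.factorial_ne_zero) (?_ : (k ! : ℝ) * _ = _)
  linear_combination -hsucc

theorem choose_nonneg {r : ℝ} {k : ℕ} (h : (k : ℝ) ≤ r + 1) : 0 ≤ Ring.choose r k := by
  induction k with
  | zero => simp
  | succ k ih =>
    push_cast at h
    have hk := succ_mul_choose_succ r k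
    have := mul_nonneg (show 0 ≤ r - k by linarith) (ih (by linarith))
    rw [← hk] at this
    exact nonneg_of_mul_nonneg_right this (by positivity)

theorem choose_le_choose {r s : ℝ} {k : ℕ} (hrs : r ≤ s) (h : (k : ℝ) ≤ r + 1) :
    Ring.choose r k ≤ Ring.choose s k := by
  induction k with
  | zero => simp
  | succ k ih =>
    push_cast at h
    have hr := succ_mul_choose_succ r k
    have hs := succ_mul_choose_succ s k
    have hprod : (r - k) * Ring.choose r k ≤ (s - k) * Ring.choose s k :=
      mul_le_mul (by linarith) (ih (by linarith)) (choose_nonneg (by linarith)) (by linarith)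
    rw [← hr, ← hs] at hprod
    exact le_of_mul_le_mul_left hprod (by positivity)

/-- The polynomial `∑ j ≤ n, choose α j * choose β (n - j) * X ^ j`. For `α = b + ν`, `β = a - ν`,
`n = a` and for `α = a - ν`, `β = b + ν`, `n = b` these are the numerator and the denominator of
the Padé approximant of type `(a, b)` to `t ^ ν` at `t = 1`. -/
noncomputable def padePoly (α β : ℝ) (n : ℕ) : ℝ[X] :=
  ∑ j ∈ Finset.range (n + 1), C (Ring.choose α j * Ring.choose β (n - j)) * X ^ j

theorem coeff_padePoly (α β : ℝ) (n j : ℕ) :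
    (padePoly α β n).coeff j = if j ≤ n then Ring.choose α j * Ring.choose β (n - j) else 0 := by
  simp only [padePoly, finsetSum_coeff, coeff_C_mul_X_pow, Finset.sum_ite_eq, Finset.mem_range,
    Nat.lt_succ_iff]

theorem eval_padePoly (α β : ℝ) (n : ℕ) (t : ℝ) :
    (padePoly α β n).eval t =
      ∑ j ∈ Finset.range (n + 1), Ring.choose α j * Ring.choose β (n - j) * t ^ j := by
  simp [padePoly, eval_finsetSum]

theorem eval_one_padePoly (α β : ℝ) (n : ℕ) :
    (padePoly α β n).eval 1 = Ring.choose (α + β) n := by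
  simp [eval_padePoly, Ring.add_choose_eq n (Commute.all α β),
    Finset.Nat.sum_antidiagonal_eq_sum_range_succ_mk]

theorem coeff_padePoly_succ (α β : ℝ) (n j : ℕ) :
    (j + 1) * (β - n + (j + 1)) * (padePoly α β n).coeff (j + 1) =
      (α - j) * (n - j) * (padePoly α β n).coeff j := by
  rcases lt_trichotomy j n with h | rfl | h
  · obtain ⟨m, rfl⟩ := Nat.exists_eq_add_of_lt h
    have hα := succ_mul_choose_succ α j
    have hβ := succ_mul_choose_succ β m
    simp only [coeff_padePoly, h.le, if_true, show j + 1 ≤ j + m + 1 by lia,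
      show j + m + 1 - (j + 1) = m by lia, show j + m + 1 - j = m + 1 by lia]
    push_cast
    linear_combination (β - m) * Ring.choose β m * hα
      - (α - j) * Ring.choose α j * hβ
  · simp [coeff_padePoly]
  · simp [coeff_padePoly, h.not_ge, show ¬ j + 1 ≤ n by lia]

theorem X_mul_derivative_padePoly (α β : ℝ) (n : ℕ) :
    let p := padePoly α β n
    let euler : ℝ[X] → ℝ[X] := fun q ↦ X * derivative q
    euler (euler p) + C (β - n) * euler p =
      X * (C (α * n) * p - C (α + n) * euler p + euler (euler p)) := by
  intro p euler
  have coeff_euler (q : ℝ[X]) (j : ℕ) : (euler q).coeff j = j * q.coeff j := by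
    cases j <;> simp [euler, coeff_derivative, mul_comm]
  ext j
  cases j with
  | zero => simp [coeff_euler]
  | succ j =>
    have := coeff_padePoly_succ α β n j
    simp only [coeff_add, coeff_sub, coeff_C_mul, coeff_X_mul, coeff_euler]
    push_cast
    linear_combination this

theorem eq_C_mul_one_sub_X_pow {p : ℝ[X]} {N : ℕ}
    (h : (1 - X) * derivative p = -(N : ℝ[X]) * p) : p = C (p.coeff 0) * (1 - X) ^ N := by
  have coeff_succ {q : ℝ[X]} (hq : (1 - X) * derivative q = -(N : ℝ[X]) * q) (k : ℕ) :
      (k + 1) * q.coeff (k + 1) = (k - N) * q.coeff k := by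
    have := congrArg (coeff · k) hq
    cases k <;> simp [sub_mul, coeff_derivative, coeff_X_mul, coeff_natCast_mul] at this ⊢ <;>
      linarith
  have hpow : (1 - X) * derivative (C (p.coeff 0) * (1 - X) ^ N : ℝ[X]) =
      -(N : ℝ[X]) * (C (p.coeff 0) * (1 - X) ^ N) := by
    cases N with
    | zero => simp
    | succ N => simp [derivative_pow]; ring
  ext k
  induction k with
  | zero => simp [coeff_zero_eq_eval_zero]
  | succ k ih =>
    refine mul_left_cancel₀ (show (k + 1 : ℝ) ≠ 0 by positivity) ?_
    rw [coeff_succ h, coeff_succ hpow, ih]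

/-- The numerator of the Padé approximant to `t ^ ν` at `t = 1`. -/
noncomputable def padeNum (ν : ℝ) (a b : ℕ) : ℝ[X] := padePoly (b + ν) (a - ν) a

/-- The denominator of the Padé approximant to `t ^ ν` at `t = 1`. -/
noncomputable def padeDen (ν : ℝ) (a b : ℕ) : ℝ[X] := padePoly (a - ν) (b + ν) b

theorem eval_one_padeNum (ν : ℝ) (a b : ℕ) : (padeNum ν a b).eval 1 = (a + b).choose a := by
  rw [padeNum, eval_one_padePoly, ← Ring.choose_natCast]
  push_cast
  congr 1
  ring

theorem eval_one_padeDen (ν : ℝ) (a b : ℕ) : (padeDen ν a b).eval 1 = (a + b).choose a := by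
  rw [padeDen, eval_one_padePoly, Nat.choose_symm_add, ← Ring.choose_natCast]
  push_cast
  congr 1
  ring

/-- `t ^ (ν + 1)` times the numerator of the derivative of `P(t) / (t ^ ν * Q(t))`, up to sign,
where `P / Q` is the Padé approximant to `t ^ ν`. -/
noncomputable def padeWronskian (ν : ℝ) (a b : ℕ) : ℝ[X] :=
  C ν * padeNum ν a b * padeDen ν a b - X * derivative (padeNum ν a b) * padeDen ν a b +
    padeNum ν a b * (X * derivative (padeDen ν a b))

theorem padeWronskian_eq (ν : ℝ) (a b : ℕ) :
    padeWronskian ν a b =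
      C (ν * Ring.choose (a - ν) a * Ring.choose (b + ν) b) * (1 - X) ^ (a + b) := by
  have hP := X_mul_derivative_padePoly (b + ν) (a - ν) a
  have hQ := X_mul_derivative_padePoly (a - ν) (b + ν) b
  have hode : (1 - X) * derivative (padeWronskian ν a b) =
      -((a + b : ℕ) : ℝ[X]) * padeWronskian ν a b := by
    refine mul_left_cancel₀ (X_ne_zero (R := ℝ)) ?_
    rw [← padeNum] at hP
    rw [← padeDen] at hQ
    simp only [derivative_mul, derivative_X, C_add, C_sub, C_mul, one_mul, C_eq_natCast] at hP hQ
    simp only [padeWronskian, derivative_mul, derivative_sub, derivative_add, derivative_C,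
      derivative_X, one_mul, zero_mul]
    push_cast
    linear_combination padeNum ν a b * hQ - padeDen ν a b * hP
  convert eq_C_mul_one_sub_X_pow hode using 3
  simp [padeWronskian, padeNum, padeDen, coeff_padePoly, mul_coeff_zero]

theorem padeDen_coeff_nonneg {ν : ℝ} {a b : ℕ} (hν : 0 ≤ ν) (hν' : ν ≤ 1) (hab : b ≤ a) (j : ℕ) :
    0 ≤ (padeDen ν a b).coeff j := by
  rw [padeDen, coeff_padePoly]
  split_ifs with hj
  · have hj' : (j : ℝ) ≤ a := by exact_mod_cast hj.trans hab
    have hbj : ((b - j : ℕ) : ℝ) ≤ b := by exact_mod_cast b.sub_le j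
    exact mul_nonneg (choose_nonneg (by linarith)) (choose_nonneg (by linarith))
  · exact le_rfl

theorem padeDen_monotoneOn {ν : ℝ} {a b : ℕ} (hν : 0 ≤ ν) (hν' : ν ≤ 1) (hab : b ≤ a) :
    MonotoneOn (fun t ↦ (padeDen ν a b).eval t) (Set.Ici 0) := by
  intro s hs t _ hst
  simp only [eval_eq_sum_range]
  exact Finset.sum_le_sum fun j _ ↦
    mul_le_mul_of_nonneg_left (pow_le_pow_left₀ hs hst j) (padeDen_coeff_nonneg hν hν' hab j)

theorem choose_mul_pow_le_eval_padeDen {ν : ℝ} {a b : ℕ} (hν : 0 ≤ ν) (hν' : ν ≤ 1) (hab : b ≤ a)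
    {t : ℝ} (ht : 0 ≤ t) (ht' : t ≤ 1) :
    (a + b).choose a * t ^ b ≤ (padeDen ν a b).eval t := by
  rw [← eval_one_padeDen ν, eval_eq_sum_range, eval_eq_sum_range, Finset.sum_mul]
  refine Finset.sum_le_sum fun j hj ↦ ?_
  have hdeg : (padeDen ν a b).natDegree ≤ b :=
    natDegree_le_iff_coeff_eq_zero.2 fun k hk ↦ by simp [padeDen, coeff_padePoly, hk.not_ge]
  rw [one_pow, mul_one]
  exact mul_le_mul_of_nonneg_left
    (pow_le_pow_of_le_one ht ht' ((Finset.mem_range_succ_iff.1 hj).trans hdeg))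
    (padeDen_coeff_nonneg hν hν' hab j)

theorem hasDerivAt_padeNum_div (ν : ℝ) (a b : ℕ) {t : ℝ} (ht : 0 < t)
    (hQ : (padeDen ν a b).eval t ≠ 0) :
    HasDerivAt (fun t ↦ (padeNum ν a b).eval t * t ^ (-ν) / (padeDen ν a b).eval t)
      (-(padeWronskian ν a b).eval t * t ^ (-ν - 1) / (padeDen ν a b).eval t ^ 2) t := by
  have hpow := Real.hasDerivAt_rpow_const (p := -ν) (Or.inl ht.ne')
  have hrpow : t ^ (-ν) = t * t ^ (-ν - 1) := by
    rw [mul_comm, ← Real.rpow_add_one ht.ne', sub_add_cancel]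
  refine ((((padeNum ν a b).hasDerivAt t).fun_mul hpow).fun_div
    ((padeDen ν a b).hasDerivAt t) hQ).congr_deriv ?_
  simp only [padeWronskian, hrpow, eval_add, eval_sub, eval_mul, eval_C, eval_X]
  ring

theorem wronskian_const_le {ν : ℝ} (hν : 0 ≤ ν) (hν' : ν ≤ 1) (a b : ℕ) :
    ν * Ring.choose (a - ν) a * Ring.choose (b + ν) b ≤ ν * (b + 1) := by
  have ha : Ring.choose (a - ν : ℝ) a ≤ 1 := by
    simpa [Ring.choose_natCast] using
      choose_le_choose (r := a - ν) (s := a) (k := a) (by linarith) (by linarith)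
  have hb : Ring.choose (b + ν : ℝ) b ≤ b + 1 := by
    have := choose_le_choose (r := b + ν) (s := (b + 1 : ℕ)) (k := b) (by simpa) (by linarith)
    rw [Ring.choose_natCast, Nat.choose_succ_self_right] at this
    exact_mod_cast this
  have hb0 : 0 ≤ Ring.choose (b + ν : ℝ) b := choose_nonneg (by linarith)
  nlinarith [mul_le_mul_of_nonneg_left hb hν, mul_le_mul_of_nonneg_left ha (mul_nonneg hν hb0)]

theorem eval_padeDen_pos {ν : ℝ} (hν : 0 ≤ ν) (hν' : ν ≤ 1) {a b : ℕ} (hab : b ≤ a) {t : ℝ}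
    (ht : 0 < t) (ht' : t ≤ 1) : 0 < (padeDen ν a b).eval t :=
  (mul_pos (Nat.cast_pos.2 (Nat.choose_pos (Nat.le_add_right a b))) (pow_pos ht b)).trans_le
    (choose_mul_pow_le_eval_padeDen hν hν' hab ht.le ht')

theorem exists_padeNum_div_sub_one_eq {ν : ℝ} (hν : 0 ≤ ν) (hν' : ν ≤ 1) {a b : ℕ}
    (hab : b ≤ a) {w : ℝ} (hw : 0 < w) (hw' : w < 1) :
    ∃ ξ ∈ Set.Ioo w 1, (padeNum ν a b).eval w * w ^ (-ν) / (padeDen ν a b).eval w - 1 =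
      (1 - w) * (ν * Ring.choose (a - ν) a * Ring.choose (b + ν) b * (1 - ξ) ^ (a + b) *
        ξ ^ (-ν - 1) / (padeDen ν a b).eval ξ ^ 2) := by
  have hderiv {t : ℝ} (ht : 0 < t) (ht' : t ≤ 1) :=
    hasDerivAt_padeNum_div ν a b ht (eval_padeDen_pos hν hν' hab ht ht').ne'
  obtain ⟨ξ, hξ, hmean⟩ := exists_hasDerivAt_eq_slope _ _ hw'
    (fun t ht ↦ (hderiv (hw.trans_le ht.1) ht.2).continuousAt.continuousWithinAt)
    (fun t ht ↦ hderiv (hw.trans ht.1) ht.2.le)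
  have hone : (padeNum ν a b).eval 1 * 1 ^ (-ν) / (padeDen ν a b).eval 1 = 1 := by
    rw [Real.one_rpow, mul_one, eval_one_padeNum, ← eval_one_padeDen ν,
      div_self (eval_padeDen_pos hν hν' hab one_pos le_rfl).ne']
  rw [eq_div_iff (sub_pos.2 hw').ne', padeWronskian_eq] at hmean
  simp only [eval_mul, eval_C, eval_pow, eval_sub, eval_one, eval_X] at hmean
  exact ⟨ξ, hξ, by linear_combination hmean + hone⟩

theorem abs_padeNum_sub_rpow_mul_padeDen_le {ν : ℝ} (hν : 0 ≤ ν) (hν' : ν ≤ 1) {a b : ℕ}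
    (hab : b ≤ a) {w : ℝ} (hw : 0 < w) (hw' : w < 1) :
    |(padeNum ν a b).eval w - w ^ ν * (padeDen ν a b).eval w| ≤
      ν * (b + 1) * (1 - w) ^ (a + b + 1) / (w * (padeDen ν a b).eval w) := by
  obtain ⟨ξ, ⟨hξ, hξ'⟩, hmean⟩ := exists_padeNum_div_sub_one_eq hν hν' hab hw hw'
  set P := fun t ↦ (padeNum ν a b).eval t
  set Q := fun t ↦ (padeDen ν a b).eval t
  have hQw : 0 < Q w := eval_padeDen_pos hν hν' hab hw hw'.le
  have hQξ : Q w ≤ Q ξ := padeDen_monotoneOn hν hν' hab hw.le (hw.trans hξ).le hξ.le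
  set c := ν * Ring.choose (a - ν) a * Ring.choose (b + ν) b
  have hc0 : 0 ≤ c := mul_nonneg (mul_nonneg hν (choose_nonneg (by linarith)))
    (choose_nonneg (by linarith))
  have hξ0 := hw.trans hξ
  have : 0 ≤ 1 - w := by linarith
  have : 0 ≤ 1 - ξ := by linarith
  have hrpow : w ^ ν * w ^ (-ν) = 1 := by rw [← Real.rpow_add hw, add_neg_cancel, Real.rpow_zero]
  have hrpow' : w ^ ν * w ^ (-ν - 1) * w = 1 := by
    rw [mul_assoc, ← Real.rpow_add_one hw.ne', sub_add_cancel, hrpow]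
  have hpow : ξ ^ (-ν - 1) ≤ w ^ (-ν - 1) :=
    Real.rpow_le_rpow_of_nonpos hw hξ.le (by linarith)
  calc |P w - w ^ ν * Q w| = |w ^ ν * Q w * (P w * w ^ (-ν) / Q w - 1)| := by
        congr 1
        field_simp
        linear_combination -P w * hrpow
    _ = w ^ ν * Q w * ((1 - w) * (c * (1 - ξ) ^ (a + b) * ξ ^ (-ν - 1) / Q ξ ^ 2)) := by
        rw [hmean, abs_of_nonneg (by positivity)]
    _ ≤ w ^ ν * Q w *
          ((1 - w) * (ν * (b + 1) * (1 - w) ^ (a + b) * w ^ (-ν - 1) / Q w ^ 2)) := by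
        gcongr
        exact wronskian_const_le hν hν' a b
    _ = ν * (b + 1) * (1 - w) ^ (a + b + 1) / (w * Q w) := by
        field_simp
        linear_combination ν * (1 - w) ^ (a + b + 1) * hrpow'

end PadeApproximation

section Content

/-- The falling product `h * (h - 2) * ⋯ * (h - 2 * (n - 1))`, which is `2 ^ n * n!` times the
binomial coefficient `h / 2` over `n`. -/
def oddProd (h : ℤ) (n : ℕ) : ℤ := ∏ j ∈ Finset.range n, (h - 2 * j)

theorem odd_oddProd {h : ℤ} (hh : Odd h) (n : ℕ) : Odd (oddProd h n) :=
  Finset.prod_induction _ Odd (fun _ _ ↦ Odd.mul) odd_one fun _ _ ↦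
    hh.sub_even (even_two_mul _)

theorem two_pow_mul_factorial_mul_choose (h : ℤ) (n : ℕ) :
    2 ^ n * n ! * Ring.choose (h / 2 : ℝ) n = oddProd h n := by
  induction n with
  | zero => simp [oddProd]
  | succ n ih =>
    have hn := succ_mul_choose_succ (h / 2 : ℝ) n
    rw [oddProd, Finset.prod_range_succ, ← oddProd, Nat.factorial_succ]
    push_cast
    rw [← ih]
    linear_combination 2 ^ (n + 1) * n ! * hn

/-- The number of multiples of `r` among the factors of `oddProd h n`. -/
def multCount (h : ℤ) (n r : ℕ) : ℕ := #{j ∈ Finset.range n | (r : ℤ) ∣ h - 2 * (j : ℕ)}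

theorem div_add_le_multCount {h : ℤ} {r j₀ : ℕ} (hj₀ : j₀ < r) (hdvd : (r : ℤ) ∣ h - 2 * (j₀ : ℤ))
    (n : ℕ) : n / r + (if j₀ < n % r then 1 else 0) ≤ multCount h n r := by
  have hcount := Nat.count_modEq_card n (j₀.zero_le.trans_lt hj₀) j₀
  rw [Nat.mod_eq_of_lt hj₀] at hcount
  rw [← hcount, Nat.count_eq_card_filter_range, multCount]
  refine Finset.card_le_card (Finset.monotone_filter_right _ fun j _ hj ↦ ?_)
  obtain ⟨c, hc⟩ := Nat.modEq_iff_dvd.1 hj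
  obtain ⟨d, hd⟩ := hdvd
  exact ⟨d + 2 * c, by linear_combination hd + 2 * hc⟩

theorem div_le_multCount (h : ℤ) {r : ℕ} (hr : Odd r) (n : ℕ) : n / r ≤ multCount h n r := by
  obtain ⟨t, rfl⟩ := hr
  obtain ⟨j₀, hj₀, hmod⟩ := Int.existsUnique_equiv_nat (h * (t + 1)) (b := (2 * t + 1 : ℕ)) (by lia)
  refine le_self_add.trans (div_add_le_multCount (j₀ := j₀) (by lia) ?_ n)
  obtain ⟨c, hc⟩ := hmod.dvd
  refine ⟨2 * c - h, ?_⟩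
  push_cast at hc ⊢
  linear_combination 2 * hc

theorem le_mod_of_odd_div {a t : ℕ} (h : Odd (2 * a / (2 * t + 1))) : t + 1 ≤ a % (2 * t + 1) := by
  by_contra! hlt
  have hdiv : 2 * a / (2 * t + 1) = 2 * (a / (2 * t + 1)) := by
    rw [Nat.div_eq_iff (by lia)]
    have := Nat.div_add_mod a (2 * t + 1)
    have : 2 * (a / (2 * t + 1)) * (2 * t + 1) = 2 * ((2 * t + 1) * (a / (2 * t + 1))) := by ring
    lia
  exact Nat.not_odd_iff_even.2 (even_two_mul _) (hdiv ▸ h)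

theorem div_add_div_lt_multCount_add {a b i l r : ℕ} (hr : Odd r) (hil : i + l = a ∨ i + l = b)
    (ha : Odd (2 * a / r)) (hb : Odd (2 * b / r)) :
    i / r + l / r < multCount (2 * a - 1) i r + multCount (2 * b + 1) l r := by
  obtain ⟨t, rfl⟩ := hr
  have ha' := le_mod_of_odd_div ha
  have hb' := le_mod_of_odd_div hb
  set r := 2 * t + 1 with hr
  have ha_lt := a.mod_lt (show 0 < r by lia)
  have hb_lt := b.mod_lt (show 0 < r by lia)
  have ha_mod := Nat.div_add_mod a r
  have hb_mod := Nat.div_add_mod b r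
  have hi := div_add_le_multCount (h := 2 * a - 1) (r := r) (j₀ := a % r - (t + 1)) (by lia)
    ⟨2 * (a / r : ℕ) + 1, by zify [ha'] at *; linear_combination -2 * ha_mod - hr⟩ i
  have hl := div_add_le_multCount (h := 2 * b + 1) (r := r) (j₀ := b % r - t) (by lia)
    ⟨2 * (b / r : ℕ) + 1, by
      have : t ≤ b % r := by lia
      zify [this] at *
      linear_combination -2 * hb_mod - hr⟩ l
  have hexceed : a % r - (t + 1) < i % r ∨ b % r - t < l % r := by
    by_contra! ⟨hi', hl'⟩
    have hsum := Nat.add_mod_of_add_mod_lt (show i % r + l % r < r by lia)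
    rcases hil with h | h <;> rw [h] at hsum <;> lia
  rcases hexceed with h | h
  · rw [if_pos h] at hi
    lia
  · rw [if_pos h] at hl
    lia

theorem sum_multCount_le_factorization {h : ℤ} (hh : Odd h) (n c : ℕ) {p : ℕ} (hp : p.Prime) :
    ∑ k ∈ Finset.Ico 1 c, multCount h n (p ^ k) ≤ (oddProd h n).natAbs.factorization p := by
  have hfactor (j : ℕ) : (h - 2 * (j : ℤ)).natAbs ≠ 0 := by
    obtain ⟨m, rfl⟩ := hh
    lia
  have habs : (oddProd h n).natAbs = ∏ j ∈ Finset.range n, (h - 2 * (j : ℤ)).natAbs :=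
    map_prod Int.natAbsHom _ _
  rw [habs, Nat.factorization_prod_apply fun j _ ↦ hfactor j]
  simp only [multCount, Finset.card_filter]
  rw [Finset.sum_comm]
  refine Finset.sum_le_sum fun j _ ↦ ?_
  rw [← Finset.card_filter]
  refine (Finset.card_le_card fun k hk ↦ ?_).trans (Nat.card_Icc 1 _).le
  rw [Finset.mem_filter, Finset.mem_Ico] at hk
  exact Finset.mem_Icc.2 ⟨hk.1.1, (hp.pow_dvd_iff_le_factorization (hfactor j)).1
    (Int.natCast_dvd.1 hk.2)⟩

/-- The odd `r` up to `2 * b` whose multiples occur once more often among the numerators than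
among the denominators of the coefficients of the Padé polynomials. -/
def contentSupport (a b : ℕ) : Finset ℕ :=
  {r ∈ Finset.Icc 1 (2 * b) | Odd r ∧ Odd (2 * a / r) ∧ Odd (2 * b / r)}

/-- A common divisor of the coefficients of the Padé polynomials `padeNum (1 / 2) a b` and
`padeDen (1 / 2) a b`, up to powers of two; its logarithm is the sum of the von Mangoldt function
over `contentSupport a b`. -/
def content (a b : ℕ) : ℕ :=
  ∏ r ∈ contentSupport a b, if IsPrimePow r then r.minFac else 1

theorem content_ne_zero (a b : ℕ) : content a b ≠ 0 :=
  Finset.prod_ne_zero_iff.2 fun r _ ↦ by split_ifs; exacts [r.minFac_pos.ne', one_ne_zero]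

theorem factorization_content_le {a b p c : ℕ} (hc : Nat.log p (2 * b) < c) :
    (content a b).factorization p ≤
      ∑ k ∈ Finset.Ico 1 c, if p ^ k ∈ contentSupport a b then 1 else 0 := by
  rw [content, Nat.factorization_prod_apply fun r _ ↦ by
    split_ifs; exacts [r.minFac_pos.ne', one_ne_zero], ← Finset.card_filter]
  calc ∑ r ∈ contentSupport a b, (if IsPrimePow r then r.minFac else 1).factorization p
      ≤ ∑ r ∈ contentSupport a b, if IsPrimePow r ∧ r.minFac = p then 1 else 0 := by
        refine Finset.sum_le_sum fun r _ ↦ ?_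
        by_cases hr : IsPrimePow r
        · simp [hr, (Nat.minFac_prime hr.ne_one).factorization, Finsupp.single_apply]
        · simp [hr]
    _ = #{r ∈ contentSupport a b | IsPrimePow r ∧ r.minFac = p} := (Finset.card_filter _ _).symm
    _ ≤ #({k ∈ Finset.Ico 1 c | p ^ k ∈ contentSupport a b}.image (p ^ ·)) := by
        refine Finset.card_le_card fun r hr ↦ ?_
        obtain ⟨hmem, hpow, rfl⟩ := Finset.mem_filter.1 hr
        have hprime := Nat.minFac_prime hpow.ne_one
        have heq := hpow.minFac_pow_factorization_eq
        refine Finset.mem_image.2 ⟨r.factorization r.minFac, ?_, heq⟩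
        have hle := (Finset.mem_Icc.1 (Finset.mem_filter.1 hmem).1).2
        rw [Finset.mem_filter, Finset.mem_Ico, heq]
        refine ⟨⟨hprime.factorization_pos_of_dvd hpow.ne_zero r.minFac_dvd, ?_⟩, hmem⟩
        exact (Nat.le_log_of_pow_le hprime.one_lt (heq.trans_le hle)).trans_lt hc
    _ ≤ _ := Finset.card_image_le

theorem factorization_content_two (a b : ℕ) : (content a b).factorization 2 = 0 := by
  have := factorization_content_le (a := a) (p := 2) (Nat.lt_succ_self (Nat.log 2 (2 * b)))
  refine Nat.le_zero.1 (this.trans_eq (Finset.sum_eq_zero fun k hk ↦ if_neg fun hmem ↦ ?_))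
  have hodd := (Finset.mem_filter.1 hmem).2.1
  exact Nat.not_odd_iff_even.2
    (even_two.pow_of_ne_zero (Nat.one_le_iff_ne_zero.1 (Finset.mem_Ico.1 hk).1)) hodd

theorem factorization_factorial_mul_content_le {a b i l p : ℕ} (hp : p.Prime) (hp2 : p ≠ 2)
    (hil : i + l = a ∨ i + l = b) :
    (i)!.factorization p + (l)!.factorization p + (content a b).factorization p ≤
      (oddProd (2 * a - 1) i).natAbs.factorization p +
        (oddProd (2 * b + 1) l).natAbs.factorization p := by
  set c := Nat.log p (2 * (a + b)) + 1
  have log_lt {m : ℕ} (hm : m ≤ 2 * (a + b)) : Nat.log p m < c :=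
    Nat.lt_succ_of_le (Nat.log_mono_right hm)
  have hodd (k : ℕ) : Odd (p ^ k) := (hp.odd_of_ne_two hp2).pow
  calc (i)!.factorization p + (l)!.factorization p + (content a b).factorization p
      ≤ ∑ k ∈ Finset.Ico 1 c, (i / p ^ k + l / p ^ k +
          if p ^ k ∈ contentSupport a b then 1 else 0) := by
        rw [Nat.factorization_factorial hp (log_lt (by lia)),
          Nat.factorization_factorial hp (log_lt (by lia)), Finset.sum_add_distrib,
          Finset.sum_add_distrib]
        gcongr
        exact factorization_content_le (log_lt (by lia))
    _ ≤ ∑ k ∈ Finset.Ico 1 c,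
          (multCount (2 * a - 1) i (p ^ k) + multCount (2 * b + 1) l (p ^ k)) := by
        refine Finset.sum_le_sum fun k _ ↦ ?_
        split_ifs with hmem
        · obtain ⟨-, ha, hb⟩ := (Finset.mem_filter.1 hmem).2
          exact div_add_div_lt_multCount_add (hodd k) hil ha hb
        · rw [add_zero]
          exact add_le_add (div_le_multCount _ (hodd k) _) (div_le_multCount _ (hodd k) _)
    _ ≤ _ := by
        rw [Finset.sum_add_distrib]
        exact add_le_add (sum_multCount_le_factorization ⟨a - 1, by ring⟩ i c hp)
          (sum_multCount_le_factorization ⟨b, rfl⟩ l c hp)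

theorem factorial_mul_content_dvd {a b i l : ℕ} (hil : i + l = a ∨ i + l = b) :
    (i ! * l ! * content a b : ℤ) ∣
      2 ^ (i + l) * (oddProd (2 * a - 1) i * oddProd (2 * b + 1) l) := by
  have oddProd_ne_zero {h : ℤ} (hh : Odd h) (n : ℕ) : (oddProd h n).natAbs ≠ 0 :=
    fun h0 ↦ by simpa [Int.natAbs_eq_zero.1 h0] using odd_oddProd hh n
  have ha := oddProd_ne_zero (h := 2 * a - 1) ⟨a - 1, by ring⟩ i
  have hb := oddProd_ne_zero (h := 2 * b + 1) ⟨b, rfl⟩ l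
  have hgg := content_ne_zero a b
  rw [← Int.natAbs_dvd_natAbs]
  simp only [Int.natAbs_mul, Int.natAbs_pow, Int.natAbs_natCast]
  rw [← Nat.factorization_prime_le_iff_dvd (by positivity) (by positivity)]
  intro p hp
  rw [Nat.factorization_mul (by positivity) hgg,
    Nat.factorization_mul (by positivity) (by positivity),
    Nat.factorization_mul (by positivity) (by positivity), Nat.factorization_mul ha hb]
  simp only [Finsupp.add_apply]
  rcases eq_or_ne p 2 with rfl | hp2
  · have hi := Nat.factorization_factorial_le_div_pred hp i
    have hl := Nat.factorization_factorial_le_div_pred hp l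
    have hpow : (Int.natAbs 2 ^ (i + l)).factorization 2 = i + l := by
      rw [show Int.natAbs 2 = 2 from rfl, hp.factorization_pow, Finsupp.single_eq_same]
    rw [factorization_content_two, hpow]
    lia
  · have := factorization_factorial_mul_content_le hp hp2 hil
    lia

theorem two_pow_mul_factorial_mul_choose_mul_choose (h h' : ℤ) {n j : ℕ} (hj : j ≤ n) :
    2 ^ n * (j ! * (n - j)!) * (Ring.choose (h / 2 : ℝ) j * Ring.choose (h' / 2 : ℝ) (n - j)) =
      oddProd h j * oddProd h' (n - j) := by
  obtain ⟨k, rfl⟩ := Nat.exists_eq_add_of_le hj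
  rw [← two_pow_mul_factorial_mul_choose, ← two_pow_mul_factorial_mul_choose, pow_add,
    Nat.add_sub_cancel_left]
  ring

theorem two_pow_mul_div_two_pow (x : ℝ) (s : ℕ) {n j : ℕ} (hj : j ≤ n) :
    2 ^ (s * n) * (x / 2 ^ s) ^ j = x ^ j * 2 ^ (s * (n - j)) := by
  obtain ⟨k, rfl⟩ := Nat.exists_eq_add_of_le hj
  rw [Nat.add_sub_cancel_left, div_pow, ← pow_mul, mul_add, pow_add]
  field_simp

theorem exists_odd_eq_factorial_mul_eval_padePoly {h : ℤ} (h' : ℤ) (hh : Odd h) (n : ℕ) {s : ℕ}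
    (hs : s ≠ 0) {x : ℤ} (hx : Odd x) :
    ∃ o : ℤ, Odd o ∧
      n ! * 2 ^ ((s + 1) * n) * (padePoly (h / 2) (h' / 2) n).eval (x / 2 ^ s : ℝ) = o := by
  refine ⟨∑ j ∈ Finset.range (n + 1),
    n.choose j * (oddProd h j * oddProd h' (n - j)) * (x ^ j * 2 ^ (s * (n - j))), ?_, ?_⟩
  · rw [Finset.sum_range_succ]
    refine (Finset.even_sum _ fun j hj ↦ ?_).add_odd ?_
    · have := Finset.mem_range.1 hj
      exact ((even_two.pow_of_ne_zero (mul_ne_zero hs (by lia))).mul_left _).mul_left _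
    · simpa [oddProd] using (odd_oddProd hh n).mul hx.pow
  · rw [eval_padePoly, Finset.mul_sum, Int.cast_sum]
    refine Finset.sum_congr rfl fun j hj ↦ ?_
    have hj := Finset.mem_range_succ_iff.1 hj
    push_cast
    rw [← two_pow_mul_factorial_mul_choose_mul_choose h h' hj, ← two_pow_mul_div_two_pow _ s hj,
      ← Nat.choose_mul_factorial_mul_factorial hj, add_one_mul, pow_add]
    push_cast
    ring

theorem exists_mul_eq_two_pow_mul_eval_padePoly {h h' : ℤ} {n g : ℕ} (s : ℕ) (x : ℤ)
    (hg : ∀ j ≤ n, (j ! * (n - j)! * g : ℤ) ∣ 2 ^ n * (oddProd h j * oddProd h' (n - j))) :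
    ∃ p : ℤ, 2 ^ ((s + 2) * n) * (padePoly (h / 2) (h' / 2) n).eval (x / 2 ^ s : ℝ) = g * p := by
  choose! p hp using hg
  refine ⟨∑ j ∈ Finset.range (n + 1), p j * (x ^ j * 2 ^ (s * (n - j))), ?_⟩
  rw [eval_padePoly, Finset.mul_sum, Int.cast_sum, Finset.mul_sum]
  refine Finset.sum_congr rfl fun j hj ↦ ?_
  have hj := Finset.mem_range_succ_iff.1 hj
  have hpj : (2 : ℝ) ^ n * (oddProd h j * oddProd h' (n - j)) = j ! * (n - j)! * g * p j := by
    exact_mod_cast hp j hj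
  rw [← two_pow_mul_factorial_mul_choose_mul_choose h h' hj] at hpj
  refine mul_left_cancel₀ (show (j ! * (n - j)! : ℝ) ≠ 0 by positivity) ?_
  push_cast
  rw [← two_pow_mul_div_two_pow _ s hj, add_mul, pow_add, mul_comm 2 n, pow_mul _ n 2]
  linear_combination 2 ^ (s * n) * (x / 2 ^ s) ^ j * hpj

end Content

section Nonvanishing

theorem le_padicValNat_two_factorial_add_log (n : ℕ) :
    n ≤ padicValNat 2 n ! + Nat.log 2 n + 1 := by
  rcases n.eq_zero_or_pos with rfl | hn
  · simp
  have hlegendre := sub_one_mul_padicValNat_factorial (p := 2) n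
  have hdigits := List.sum_le_card_nsmul (Nat.digits 2 n) 1 fun x hx ↦
    Nat.le_of_lt_succ (Nat.digits_lt_base one_lt_two hx)
  rw [Nat.length_digits 2 n one_lt_two hn.ne', smul_eq_mul] at hdigits
  omega

theorem padicValNat_two_factorial_le (n : ℕ) : padicValNat 2 n ! ≤ n := by
  have := sub_one_mul_padicValNat_factorial (p := 2) n
  omega

-- The two products have different 2-adic valuations.
theorem two_pow_mul_mul_ne_mul_mul {a b d : ℕ} {x y p q o₁ o₂ : ℤ} (hx : Odd x) (hy : Odd y)
    (ho₁ : Odd o₁) (ho₂ : Odd o₂) (hp : a ! * p = 2 ^ a * o₁) (hq : b ! * q = 2 ^ b * o₂)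
    (hd : Nat.log 2 b + 1 < d) : 2 ^ d * x * p ≠ y * q := by
  intro heq
  have heq' : (2 : ℤ) ^ (d + a) * (b ! * (x * o₁)) = 2 ^ b * (a ! * (y * o₂)) := by
    rw [pow_add]
    linear_combination (a ! * b ! : ℤ) * heq - 2 ^ d * x * b ! * hp + y * a ! * hq
  have hval (k n : ℕ) {z : ℤ} (hz : Odd z) :
      padicValInt 2 (2 ^ k * (n ! * z)) = k + padicValNat 2 n ! := by
    have hz0 : z ≠ 0 := by rintro rfl; simp at hz
    have hn : (n ! : ℤ) ≠ 0 := by exact_mod_cast n.factorial_ne_zero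
    have h2 : padicValInt 2 (2 ^ k) = k := by
      rw [padicValInt, Int.natAbs_pow]
      exact padicValNat.prime_pow k
    rw [padicValInt.mul (by positivity) (mul_ne_zero hn hz0), padicValInt.mul hn hz0,
      padicValInt.of_nat, h2, padicValInt.eq_zero_of_not_dvd (by
        exact fun h ↦ Int.not_even_iff_odd.2 hz (even_iff_two_dvd.2 h)), add_zero]
  have hvals := congrArg (padicValInt 2) heq'
  rw [hval _ _ (hx.mul ho₁), hval _ _ (hy.mul ho₂)] at hvals
  have := padicValNat_two_factorial_le a
  have := le_padicValNat_two_factorial_add_log b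
  omega

end Nonvanishing

section Approximation

theorem exists_eval_padeNum_padeDen_eq {a b s : ℕ} (hs : s ≠ 0) {x : ℤ} (hx : Odd x) :
    ∃ p q o₁ o₂ : ℤ, Odd o₁ ∧ Odd o₂ ∧
      2 ^ ((s + 2) * a) * (padeNum (1 / 2) a b).eval (x / 2 ^ s : ℝ) = content a b * p ∧
      2 ^ ((s + 2) * b) * (padeDen (1 / 2) a b).eval (x / 2 ^ s : ℝ) = content a b * q ∧
      a ! * (content a b * p) = 2 ^ a * o₁ ∧ b ! * (content a b * q) = 2 ^ b * o₂ := by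
  have hnum : padeNum (1 / 2) a b =
      padePoly ((2 * b + 1 : ℤ) / 2) ((2 * a - 1 : ℤ) / 2) a := by
    rw [padeNum]; congr 1 <;> push_cast <;> ring
  have hden : padeDen (1 / 2) a b =
      padePoly ((2 * a - 1 : ℤ) / 2) ((2 * b + 1 : ℤ) / 2) b := by
    rw [padeDen]; congr 1 <;> push_cast <;> ring
  have hodd_sub : Odd (2 * a - 1 : ℤ) := ⟨a - 1, by ring⟩
  obtain ⟨o₁, ho₁, hnum_odd⟩ := exists_odd_eq_factorial_mul_eval_padePoly
    (2 * a - 1) (odd_two_mul_add_one (b : ℤ)) a hs hx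
  obtain ⟨o₂, ho₂, hden_odd⟩ := exists_odd_eq_factorial_mul_eval_padePoly
    (2 * b + 1) hodd_sub b hs hx
  obtain ⟨p, hp⟩ := exists_mul_eq_two_pow_mul_eval_padePoly (h := 2 * b + 1) (h' := 2 * a - 1)
    (n := a) (g := content a b) s x fun j hj ↦ by
      have := factorial_mul_content_dvd (a := a) (b := b) (.inl (Nat.sub_add_cancel hj))
      rwa [Nat.sub_add_cancel hj, mul_comm (oddProd _ _), mul_comm ((a - j)! : ℤ)] at this
  obtain ⟨q, hq⟩ := exists_mul_eq_two_pow_mul_eval_padePoly (h := 2 * a - 1) (h' := 2 * b + 1)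
    (n := b) (g := content a b) s x fun j hj ↦ by
      have := factorial_mul_content_dvd (a := a) (b := b) (.inr (Nat.add_sub_cancel' hj))
      rwa [Nat.add_sub_cancel' hj] at this
  refine ⟨p, q, o₁, o₂, ho₁, ho₂, hnum ▸ hp, hden ▸ hq, ?_, ?_⟩
  · have : (a ! * (content a b * p) : ℝ) = 2 ^ a * o₁ := by rw [← hp, ← hnum_odd]; ring
    exact_mod_cast this
  · have : (b ! * (content a b * q) : ℝ) = 2 ^ b * o₂ := by rw [← hq, ← hden_odd]; ring
    exact_mod_cast this

theorem mul_sqrt_eq_mul_sqrt_two : 256 * √(32761 / 2 ^ 15) = 181 * √2 := by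
  rw [show (32761 / 2 ^ 15 : ℝ) = (181 / 256) ^ 2 * 2 by norm_num,
    Real.sqrt_mul (by positivity), Real.sqrt_sq (by positivity)]
  ring

-- `32761 = 181 ^ 2`, and `181 / 256` is a close approximation to `1 / √2`.
theorem content_le_abs_sub_add_abs_sub {a b d : ℕ} (hba : b ≤ a) (hd : Nat.log 2 b ≤ d) {x : ℕ}
    (hx : Odd x) :
    content a b ≤ 181 * |x - 2 ^ (d + 17 * (a - b)) * √2| *
        (2 ^ (17 * b) * (padeDen (1 / 2) a b).eval (32761 / 2 ^ 15)) +
      256 * 2 ^ d * 2 ^ (17 * a) * |(padeNum (1 / 2) a b).eval (32761 / 2 ^ 15) -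
        √(32761 / 2 ^ 15) * (padeDen (1 / 2) a b).eval (32761 / 2 ^ 15)| := by
  obtain ⟨p, q, o₁, o₂, ho₁, ho₂, hp, hq, hpo, hqo⟩ := exists_eval_padeNum_padeDen_eq
    (a := a) (b := b) (s := 15) (by simp) (x := 32761) (by decide)
  have hne := two_pow_mul_mul_ne_mul_mul (x := 1) (y := 181 * x) (d := d + 8) odd_one
    (Odd.mul (by decide) (mod_cast hx)) ho₁ ho₂ hpo hqo (by lia)
  have hle : (content a b : ℤ) ≤
      |2 ^ (d + 8) * 1 * (content a b * p) - 181 * x * (content a b * q)| := by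
    refine Int.le_of_dvd (abs_pos.2 (sub_ne_zero.2 hne)) ((dvd_abs _ _).2 ?_)
    exact ⟨2 ^ (d + 8) * p - 181 * x * q, by ring⟩
  have hle' : (content a b : ℝ) ≤
      |2 ^ (d + 8) * 1 * (content a b * p) - 181 * x * (content a b * q)| := mod_cast hle
  push_cast at hle' hp hq
  rw [← hp, ← hq] at hle'
  set P := (padeNum (1 / 2) a b).eval (32761 / 2 ^ 15 : ℝ)
  set Q := (padeDen (1 / 2) a b).eval (32761 / 2 ^ 15 : ℝ)
  have hQ : 0 ≤ Q := (eval_padeDen_pos (by norm_num) (by norm_num) hba (by norm_num)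
    (by norm_num)).le
  have hsplit : 2 ^ (d + 8) * 1 * (2 ^ ((15 + 2) * a) * P) -
        181 * x * (2 ^ ((15 + 2) * b) * Q) =
      256 * 2 ^ d * 2 ^ (17 * a) * (P - √(32761 / 2 ^ 15) * Q) -
        181 * (x - 2 ^ (d + 17 * (a - b)) * √2) * (2 ^ (17 * b) * Q) := by
    have hpow : (2 : ℝ) ^ (17 * a) = 2 ^ (17 * (a - b)) * 2 ^ (17 * b) := by
      rw [← pow_add]; congr 1; lia
    rw [show (15 + 2) = 17 from rfl, hpow, pow_add, pow_add]
    linear_combination (2 ^ d * (2 ^ (17 * (a - b)) * 2 ^ (17 * b)) * Q) * mul_sqrt_eq_mul_sqrt_two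
  rw [hsplit] at hle'
  refine hle'.trans ((abs_sub _ _).trans_eq ?_)
  rw [add_comm]
  simp only [abs_mul, abs_pow, abs_of_nonneg hQ, Nat.abs_ofNat]

end Approximation

section VonMangoldt

/-- The linear functional `f ↦ ∑ r ≤ N, Λ r * f ⌊N / r⌋`, through which pointwise inequalities
between step functions become inequalities between `log n!`, `ψ` and `log (content a b)`. -/
noncomputable def vonMangoldtSum (N : ℕ) : (ℕ → ℝ) →ₗ[ℝ] ℝ :=
  ∑ r ∈ Finset.Ioc 0 N, vonMangoldt r • LinearMap.proj (N / r)

theorem vonMangoldtSum_apply (N : ℕ) (f : ℕ → ℝ) :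
    vonMangoldtSum N f = ∑ r ∈ Finset.Ioc 0 N, vonMangoldt r * f (N / r) := by
  simp [vonMangoldtSum]

theorem vonMangoldtSum_mono (N : ℕ) {f g : ℕ → ℝ} (h : ∀ w ≠ 0, f w ≤ g w) :
    vonMangoldtSum N f ≤ vonMangoldtSum N g := by
  rw [vonMangoldtSum_apply, vonMangoldtSum_apply]
  refine Finset.sum_le_sum fun r hr ↦ mul_le_mul_of_nonneg_left (h _ ?_) vonMangoldt_nonneg
  obtain ⟨hr, hrN⟩ := Finset.mem_Ioc.1 hr
  exact (Nat.div_pos hrN hr).ne'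

theorem vonMangoldtSum_indicator_le (N : ℕ) {d : ℕ} (hd : d ≠ 0) :
    vonMangoldtSum N (fun w ↦ if d ≤ w then 1 else 0) = ψ (N / d) := by
  rw [vonMangoldtSum_apply, Chebyshev.psi, Nat.floor_div_eq_div]
  simp only [mul_ite, mul_one, mul_zero]
  rw [← Finset.sum_filter]
  congr 1
  ext r
  rw [Finset.mem_filter, Finset.mem_Ioc, Finset.mem_Ioc, and_assoc]
  refine and_congr_right fun hr ↦ ?_
  rw [Nat.le_div_iff_mul_le hr, Nat.le_div_iff_mul_le (Nat.pos_of_ne_zero hd), mul_comm]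
  exact and_iff_right_of_imp ((Nat.le_mul_of_pos_right r (Nat.pos_of_ne_zero hd)).trans)

theorem sum_vonMangoldt_mul_div (n : ℕ) :
    ∑ r ∈ Finset.Ioc 0 n, vonMangoldt r * ((n / r : ℕ) : ℝ) = Real.log n ! := by
  rw [← sum_Ioc_mul_zeta_eq_sum, vonMangoldt_mul_zeta]
  induction n with
  | zero => simp
  | succ n ih =>
    rw [Finset.sum_Ioc_succ_top n.zero_le, ih, Nat.factorial_succ, Nat.cast_mul,
      Real.log_mul (by positivity) (by positivity), add_comm, log_apply]

theorem vonMangoldtSum_div (N d : ℕ) :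
    vonMangoldtSum N (fun w ↦ (w / d : ℕ)) = Real.log ⌊(N / d : ℝ)⌋₊ ! := by
  rw [vonMangoldtSum_apply, Nat.floor_div_eq_div, ← sum_vonMangoldt_mul_div]
  simp only [Nat.div_right_comm N _ d]
  refine (Finset.sum_subset (Finset.Ioc_subset_Ioc_right (N.div_le_self d)) fun r hr hr' ↦ ?_).symm
  rw [Finset.mem_Ioc] at hr hr'
  rw [Nat.div_eq_of_lt (by lia), Nat.cast_zero, mul_zero]

theorem sum_vonMangoldt_even_le {n : ℕ} (hn : n ≠ 0) :
    ∑ r ∈ Finset.Ioc 0 n with Even r, vonMangoldt r ≤ Real.log n := by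
  have hsubset : {r ∈ Finset.Ioc 0 n | Even r ∧ vonMangoldt r ≠ 0} ⊆
      (Finset.Ioc 0 (Nat.log 2 n)).image (2 ^ ·) := by
    intro r hr
    obtain ⟨hr, heven, hΛ⟩ := Finset.mem_filter.1 hr
    obtain ⟨p, k, hp, hk, rfl⟩ := vonMangoldt_ne_zero_iff.1 hΛ
    obtain rfl : p = 2 :=
      (hp.nat_prime.eq_one_or_self_of_dvd 2 (even_iff_two_dvd.1
        ((Nat.even_pow.1 heven).1))).resolve_left (by simp) |>.symm
    exact Finset.mem_image.2 ⟨k, Finset.mem_Ioc.2 ⟨hk,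
      Nat.le_log_of_pow_le one_lt_two (Finset.mem_Ioc.1 hr).2⟩, rfl⟩
  calc ∑ r ∈ Finset.Ioc 0 n with Even r, vonMangoldt r
      = ∑ r ∈ Finset.Ioc 0 n with Even r ∧ vonMangoldt r ≠ 0, vonMangoldt r := by
        rw [← Finset.filter_filter, Finset.sum_filter_ne_zero]
    _ ≤ ∑ r ∈ (Finset.Ioc 0 (Nat.log 2 n)).image (2 ^ ·), vonMangoldt r :=
        Finset.sum_le_sum_of_subset_of_nonneg hsubset fun _ _ _ ↦ vonMangoldt_nonneg
    _ = ∑ _ ∈ Finset.Ioc 0 (Nat.log 2 n), Real.log 2 := by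
        rw [Finset.sum_image fun i _ j _ h ↦ Nat.pow_right_injective le_rfl h]
        refine Finset.sum_congr rfl fun k hk ↦ ?_
        rw [vonMangoldt_apply_pow (Finset.mem_Ioc.1 hk).1.ne',
          vonMangoldt_apply_prime Nat.prime_two, Nat.cast_two]
    _ = Real.log (2 ^ Nat.log 2 n) := by simp
    _ ≤ Real.log n := Real.log_le_log (by positivity) (mod_cast Nat.pow_log_le_self 2 hn)

theorem log_content (a b : ℕ) :
    Real.log (content a b) = ∑ r ∈ contentSupport a b, vonMangoldt r := by
  rw [content, Nat.cast_prod, Real.log_prod fun r _ ↦ by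
    split_ifs <;> simp [r.minFac_pos.ne']]
  refine Finset.sum_congr rfl fun r _ ↦ ?_
  rw [vonMangoldt_apply]
  split_ifs <;> simp

theorem vonMangoldtSum_odd_div_le {s t k : ℕ} (hs : s ≠ 0) (ht : t ≠ 0) (hk : k ≠ 0) :
    vonMangoldtSum (2 * s * t * k) (fun w ↦ if Odd (w / s) ∧ Odd (w / t) then 1 else 0) ≤
      Real.log (content (s * k) (t * k)) + Real.log (2 * t * k) := by
  have hdiv (r : ℕ) : 2 * s * t * k / r / s = 2 * (t * k) / r ∧
      2 * s * t * k / r / t = 2 * (s * k) / r := by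
    rw [Nat.div_right_comm, Nat.div_right_comm _ r t,
      Nat.div_eq_of_eq_mul_right (Nat.pos_of_ne_zero hs)
        (show 2 * s * t * k = s * (2 * (t * k)) by ring),
      Nat.div_eq_of_eq_mul_right (Nat.pos_of_ne_zero ht)
        (show 2 * s * t * k = t * (2 * (s * k)) by ring)]
    exact ⟨rfl, rfl⟩
  rw [vonMangoldtSum_apply, log_content]
  simp only [mul_ite, mul_one, mul_zero, hdiv]
  rw [← Finset.sum_filter]
  have hsubset : {r ∈ Finset.Ioc 0 (2 * s * t * k) |
      Odd (2 * (t * k) / r) ∧ Odd (2 * (s * k) / r)} ⊆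
      contentSupport (s * k) (t * k) ∪ {r ∈ Finset.Ioc 0 (2 * (t * k)) | Even r} := by
    intro r hr
    obtain ⟨hr, ht_odd, hs_odd⟩ := Finset.mem_filter.1 hr
    have hr0 := (Finset.mem_Ioc.1 hr).1
    have hle : r ≤ 2 * (t * k) := Nat.le_of_not_lt fun hlt ↦ by
      simp [Nat.div_eq_of_lt hlt] at ht_odd
    rcases r.even_or_odd with heven | hodd
    · exact Finset.mem_union_right _ (Finset.mem_filter.2 ⟨Finset.mem_Ioc.2 ⟨hr0, hle⟩, heven⟩)
    · exact Finset.mem_union_left _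
        (Finset.mem_filter.2 ⟨Finset.mem_Icc.2 ⟨hr0, hle⟩, hodd, hs_odd, ht_odd⟩)
  refine (Finset.sum_le_sum_of_subset_of_nonneg hsubset fun _ _ _ ↦ vonMangoldt_nonneg).trans ?_
  rw [Finset.sum_union (Finset.disjoint_left.2 fun r hr hr' ↦
    Nat.not_even_iff_odd.2 (Finset.mem_filter.1 hr).2.1 (Finset.mem_filter.1 hr').2)]
  gcongr
  refine (sum_vonMangoldt_even_le (by positivity)).trans_eq ?_
  push_cast
  rw [mul_assoc]

end VonMangoldt

section Stirling

theorem log_factorial_le {n : ℕ} (hn : n ≠ 0) :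
    Real.log n ! ≤ n * Real.log n - n + Real.log n / 2 + 1 := by
  obtain ⟨k, rfl⟩ := Nat.exists_eq_succ_of_ne_zero hn
  have h := Real.log_le_log (Stirling.stirlingSeq'_pos k)
    (Stirling.stirlingSeq'_antitone k.zero_le)
  simp only [Function.comp, zero_add, Nat.succ_eq_add_one, Stirling.stirlingSeq_one] at h
  rw [Stirling.log_stirlingSeq_formula, Real.log_mul two_ne_zero (by positivity),
    Real.log_div (by positivity) (by positivity), Real.log_div (by positivity) (by positivity),
    Real.log_exp, Real.log_sqrt zero_le_two] at h
  linarith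

theorem abs_log_factorial_floor_sub_le {x : ℝ} (hx : 1 ≤ x) :
    |Real.log ⌊x⌋₊ ! - (x * Real.log x - x)| ≤ Real.log x / 2 + 1 := by
  have hn : ⌊x⌋₊ ≠ 0 := (Nat.floor_pos.2 hx).ne'
  have hupper := log_factorial_le hn
  have hlower := Stirling.le_log_factorial_stirling hn
  have hnx : ⌊x⌋₊ ≤ x := Nat.floor_le (by linarith)
  have hxn : x < ⌊x⌋₊ + 1 := Nat.lt_floor_add_one x
  have hn1 : (1 : ℝ) ≤ ⌊x⌋₊ := mod_cast Nat.one_le_iff_ne_zero.2 hn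
  set n : ℝ := (⌊x⌋₊ : ℝ)
  have hlog_mono : Real.log n ≤ Real.log x := Real.log_le_log (by positivity) hnx
  have hlog_n : 0 ≤ Real.log n := Real.log_nonneg hn1
  have hpi : Real.log 2 ≤ Real.log (2 * Real.pi) :=
    Real.log_le_log two_pos (by linarith [Real.pi_gt_three])
  have hlog_two : Real.log x ≤ Real.log 2 + Real.log n := by
    rw [← Real.log_mul two_ne_zero (by positivity)]
    exact Real.log_le_log (by positivity) (by linarith)
  have hlow : n * (Real.log x - Real.log n) ≤ x - n := by
    rw [← Real.log_div (by positivity) (by positivity)]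
    calc n * Real.log (x / n) ≤ n * (x / n - 1) := by
          gcongr; exact Real.log_le_sub_one_of_pos (by positivity)
      _ = x - n := by field_simp
  have hhigh : x - n ≤ x * (Real.log x - Real.log n) := by
    rw [← Real.log_div (by positivity) (by positivity), ← inv_div, Real.log_inv]
    calc x - n = x * -(n / x - 1) := by field_simp; ring
      _ ≤ x * -Real.log (n / x) := by
          gcongr; exact Real.log_le_sub_one_of_pos (by positivity)
  rw [abs_le]
  constructor <;> nlinarith

end Stirling

section LogBounds

theorem log_le_div_of_pow_le {x : ℝ} (hx : 0 < x) (p : ℕ) {q : ℕ} (hq : q ≠ 0)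
    (h : x ^ q ≤ 2.7182818283 ^ p) : Real.log x ≤ p / q := by
  rw [le_div_iff₀ (by positivity), mul_comm, ← Real.log_pow, Real.log_le_iff_le_exp (by positivity),
    ← Real.exp_one_pow]
  exact h.trans (pow_le_pow_left₀ (by norm_num) Real.exp_one_gt_d9.le p)

theorem div_le_log_of_le_pow {x : ℝ} (hx : 0 < x) (p : ℕ) {q : ℕ} (hq : q ≠ 0)
    (h : 2.7182818286 ^ p ≤ x ^ q) : p / q ≤ Real.log x := by
  rw [div_le_iff₀ (by positivity), mul_comm, ← Real.log_pow, Real.le_log_iff_exp_le (by positivity),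
    ← Real.exp_one_pow]
  exact (pow_le_pow_left₀ (by positivity) Real.exp_one_lt_d9.le p).trans h

theorem log_le_add_div_sub_one {x y c : ℝ} (hx : 0 < x) (hy : 0 < y) (h : Real.log y ≤ c) :
    Real.log x ≤ c + (x / y - 1) := by
  have := Real.log_le_sub_one_of_pos (div_pos hx hy)
  rw [Real.log_div hx.ne' hy.ne'] at this
  linarith

end LogBounds

section Chebyshev

/-- The least common multiple of `1, …, n`, by structural recursion, for evaluation. -/
def lcmRec : ℕ → ℕ
  | 0 => 1
  | n + 1 => (lcmRec n).lcm (n + 1)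

theorem lcmUpto_eq_lcmRec (n : ℕ) : Nat.lcmUpto n = lcmRec n := by
  induction n with
  | zero => rfl
  | succ n ih =>
    rw [lcmRec, ← ih, Nat.lcmUpto, ← Finset.insert_Icc_right_eq_Icc_add_one n.succ_pos,
      Finset.lcm_insert]
    exact Nat.lcm_comm _ _

set_option exponentiation.threshold 3000 in
theorem lcmRec_mul_pow_le : ∀ n < 2400, lcmRec n * 1000 ^ n ≤ 3064 ^ n := by decide +kernel

theorem psi_le_of_lt {n : ℕ} (hn : n < 2400) : ψ n ≤ 1.12 * n := by
  have hlog : Real.log 3.064 ≤ 1.12 := by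
    have := log_le_div_of_pow_le (x := 3.064) (by norm_num) 28 (q := 25) (by simp) (by norm_num)
    norm_num at this ⊢
    exact this
  have hlcm : (Nat.lcmUpto n : ℝ) ≤ 3.064 ^ n := by
    rw [lcmUpto_eq_lcmRec, show (3.064 : ℝ) = 3064 / 1000 by norm_num, div_pow,
      le_div_iff₀ (by positivity)]
    exact_mod_cast lcmRec_mul_pow_le n hn
  calc ψ n = Real.log (Nat.lcmUpto n) := Chebyshev.psi_eq_log_lcmUpto n
    _ ≤ Real.log (3.064 ^ n) :=
        Real.log_le_log (mod_cast Nat.lcmUpto_pos n) hlcm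
    _ = n * Real.log 3.064 := by rw [Real.log_pow]
    _ ≤ 1.12 * n := by rw [mul_comm]; gcongr

theorem psi_sub_psi_div_six_le (n : ℕ) :
    ψ n - ψ (n / 6) ≤ Real.log n ! - Real.log ⌊(n / 2 : ℝ)⌋₊ ! - Real.log ⌊(n / 3 : ℝ)⌋₊ ! -
      Real.log ⌊(n / 5 : ℝ)⌋₊ ! + Real.log ⌊(n / 30 : ℝ)⌋₊ ! := by
  -- Chebyshev's weights, which satisfy `1 + 1 / 30 = 1 / 2 + 1 / 3 + 1 / 5`.
  have h := vonMangoldtSum_mono n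
    (f := (fun w ↦ if 1 ≤ w then 1 else 0) - fun w ↦ if 6 ≤ w then 1 else 0)
    (g := (fun w ↦ ((w / 1 : ℕ) : ℝ)) - (fun w ↦ ((w / 2 : ℕ) : ℝ)) -
      (fun w ↦ ((w / 3 : ℕ) : ℝ)) - (fun w ↦ ((w / 5 : ℕ) : ℝ)) + fun w ↦ ((w / 30 : ℕ) : ℝ))
    fun w hw ↦ by
    have hnat : (if 1 ≤ w then 1 else 0) + w / 2 + w / 3 + w / 5 ≤
        w / 1 + w / 30 + if 6 ≤ w then 1 else 0 := by split_ifs <;> lia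
    have hreal := (Nat.cast_le (α := ℝ)).2 hnat
    push_cast at hreal
    simp only [Pi.sub_apply, Pi.add_apply]
    linarith
  simp only [map_sub, map_add, vonMangoldtSum_div] at h
  rw [vonMangoldtSum_indicator_le n one_ne_zero, vonMangoldtSum_indicator_le n (by simp)] at h
  simpa using h

set_option exponentiation.threshold 3000 in
theorem psi_sub_psi_div_six_le_mul {n : ℕ} (hn : 2400 ≤ n) :
    ψ n - ψ (n / 6) ≤ 1.12 * (n - n / 6) := by
  have hn' : (2400 : ℝ) ≤ n := by exact_mod_cast hn
  have hstep := psi_sub_psi_div_six_le n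
  have h₁ := abs_le.1 (abs_log_factorial_floor_sub_le (x := n) (by linarith))
  have h₂ := abs_le.1 (abs_log_factorial_floor_sub_le (x := n / 2) (by linarith))
  have h₃ := abs_le.1 (abs_log_factorial_floor_sub_le (x := n / 3) (by linarith))
  have h₅ := abs_le.1 (abs_log_factorial_floor_sub_le (x := n / 5) (by linarith))
  have h₃₀ := abs_le.1 (abs_log_factorial_floor_sub_le (x := n / 30) (by linarith))
  have hlog30 : Real.log 30 = Real.log 2 + Real.log 3 + Real.log 5 := by
    rw [← Real.log_mul (by simp) (by simp), ← Real.log_mul (by simp) (by simp)]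
    norm_num
  rw [Real.log_div (by positivity) (by simp)] at h₂ h₃ h₅ h₃₀
  rw [Nat.floor_natCast] at h₁
  rw [hlog30] at h₃₀
  have hmain : 14 * Real.log 2 + 9 * Real.log 3 + 5 * Real.log 5 ≤ 27.64 := by
    have := log_le_div_of_pow_le (x := 2 ^ 14 * 3 ^ 9 * 5 ^ 5) (by norm_num) 691 (q := 25)
      (by simp) (by norm_num)
    rw [Real.log_mul (by simp) (by simp), Real.log_mul (by simp) (by simp), Real.log_pow,
      Real.log_pow, Real.log_pow] at this
    norm_num at this ⊢
    linarith
  have hlog : Real.log n ≤ 7.8 + (n / 2400 - 1) := by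
    refine log_le_add_div_sub_one (by positivity) (by positivity) ?_
    have := log_le_div_of_pow_le (x := 2400) (by norm_num) 39 (q := 5) (by simp) (by norm_num)
    norm_num at this ⊢
    exact this
  have hlog2 : 0 ≤ Real.log 2 := Real.log_nonneg (by norm_num)
  have hlog3 : 0 ≤ Real.log 3 := Real.log_nonneg (by norm_num)
  have hlog5 : 0 ≤ Real.log 5 := Real.log_nonneg (by norm_num)
  have hmul := mul_le_mul_of_nonneg_left hmain n.cast_nonneg (α := ℝ)
  norm_num at hlog hmul ⊢
  linarith

theorem psi_natCast_le (n : ℕ) : ψ n ≤ 1.12 * n := by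
  induction n using Nat.strong_induction_on with
  | _ n ih =>
    rcases lt_or_ge n 2400 with h | h
    · exact psi_le_of_lt h
    have hstep := psi_sub_psi_div_six_le_mul h
    have hdiv : ψ (n / 6) ≤ 1.12 * (n / 6) := by
      rw [Chebyshev.psi_eq_psi_coe_floor, Nat.floor_div_ofNat, Nat.floor_natCast]
      refine (ih _ (by lia)).trans ?_
      gcongr
      exact Nat.cast_div_le
    linarith

theorem psi_le_mul {x : ℝ} (hx : 0 ≤ x) : ψ x ≤ 1.12 * x := by
  rw [Chebyshev.psi_eq_psi_coe_floor]
  refine (psi_natCast_le _).trans ?_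
  gcongr
  exact Nat.floor_le hx

end Chebyshev

section Packing

/-- The linear functional `f ↦ ∑ w < W, f w * B ^ w`, which packs the first `W` values of `f` into
one integer with (signed) base-`B` digits. -/
noncomputable def packing (B : ℤ) (W : ℕ) : (ℕ → ℤ) →ₗ[ℤ] ℤ :=
  ∑ w ∈ Finset.range W, B ^ w • LinearMap.proj w

theorem packing_apply (B : ℤ) (W : ℕ) (f : ℕ → ℤ) :
    packing B W f = ∑ w ∈ Finset.range W, B ^ w * f w := by
  simp [packing]

theorem packing_succ (B : ℤ) (W : ℕ) (f : ℕ → ℤ) :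
    packing B (W + 1) f = B * packing B W (fun w ↦ f (w + 1)) + f 0 := by
  rw [packing_apply, packing_apply, Finset.sum_range_succ', Finset.mul_sum]
  simp only [pow_succ', mul_assoc, pow_zero, one_mul]

theorem packing_div (B : ℤ) (W d : ℕ) :
    (B - 1) * packing B W (fun w ↦ ((w / d : ℕ) : ℤ)) =
      (W / d : ℕ) * B ^ W - B ^ d * ∑ k ∈ Finset.range (W / d), (B ^ d) ^ k := by
  induction W with
  | zero => simp [packing_apply]
  | succ W ih =>
    rw [packing_apply, Finset.sum_range_succ, mul_add, ← packing_apply, ih, Nat.succ_div]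
    split_ifs with hdvd
    · have hpow : B ^ (W + 1) = B ^ d * (B ^ d) ^ (W / d) := by
        rw [← pow_succ', ← pow_mul, ← Nat.succ_div_of_dvd hdvd, Nat.mul_div_cancel' hdvd]
      rw [Finset.sum_range_succ, mul_add, ← hpow, Nat.cast_add_one]
      ring
    · rw [add_zero]
      ring

theorem packing_indicator_le (B : ℤ) {W d : ℕ} (hd : d ≤ W) :
    (B - 1) * packing B W (fun w ↦ if d ≤ w then 1 else 0) = B ^ W - B ^ d := by
  induction W, hd using Nat.le_induction with
  | base =>
    rw [packing_apply, Finset.sum_eq_zero fun w hw ↦ by simp [Finset.mem_range.1 hw], mul_zero,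
      sub_self]
  | succ W hd ih =>
    rw [packing_apply, Finset.sum_range_succ, mul_add, ← packing_apply, ih, if_pos hd]
    ring

theorem packing_periodic (B : ℤ) {f : ℕ → ℤ} {p : ℕ} (hf : Function.Periodic f p) (m : ℕ) :
    packing B (p * m) f = packing B p f * ∑ k ∈ Finset.range m, (B ^ p) ^ k := by
  induction m with
  | zero => simp [packing_apply]
  | succ m ih =>
    have hf' (w : ℕ) : f (p * m + w) = f w := by
      rw [mul_comm, add_comm]
      exact hf.nat_mul m w
    rw [packing_apply, mul_add_one, Finset.sum_range_add, ← packing_apply, ih,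
      Finset.sum_range_succ, mul_add, packing_apply B p]
    congr 1
    rw [Finset.sum_mul]
    refine Finset.sum_congr rfl fun w _ ↦ ?_
    rw [hf', pow_add, pow_mul]
    ring

theorem lt_two_pow_of_land_two_pow_eq_zero {n s : ℕ} (hn : n < 2 ^ (s + 1))
    (hland : n &&& 2 ^ s = 0) : n < 2 ^ s := by
  rw [Nat.and_two_pow, mul_eq_zero, or_iff_left (by positivity), Bool.toNat_eq_zero,
    Nat.testBit_eq_decide_div_mod_eq, decide_eq_false_iff_not] at hland
  have := Nat.div_lt_of_lt_mul (hn.trans_eq (pow_succ 2 s))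
  exact (Nat.div_eq_zero_iff_lt (by positivity)).1 (by lia)

theorem land_mask_succ_eq_zero {N s W : ℕ}
    (hland : N &&& 2 ^ s * ∑ w ∈ Finset.range (W + 1), (2 ^ (s + 1)) ^ w = 0) :
    N % 2 ^ (s + 1) &&& 2 ^ s = 0 ∧
      N / 2 ^ (s + 1) &&& 2 ^ s * ∑ w ∈ Finset.range W, (2 ^ (s + 1)) ^ w = 0 := by
  have hmask : 2 ^ s * ∑ w ∈ Finset.range (W + 1), (2 ^ (s + 1)) ^ w =
      2 ^ s + 2 ^ (s + 1) * (2 ^ s * ∑ w ∈ Finset.range W, (2 ^ (s + 1)) ^ w) := by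
    simp only [Finset.sum_range_succ', pow_succ (2 ^ (s + 1) : ℕ), ← Finset.sum_mul]
    ring
  have hs : 2 ^ s < 2 ^ (s + 1) := Nat.pow_lt_pow_succ one_lt_two
  constructor
  · have := congrArg (· % 2 ^ (s + 1)) hland
    simpa [hmask, Nat.and_mod_two_pow, Nat.mod_eq_of_lt hs] using this
  · have := congrArg (· / 2 ^ (s + 1)) hland
    simpa [hmask, Nat.and_div_two_pow, Nat.add_mul_div_left, Nat.div_eq_of_lt hs] using this

theorem nonneg_of_land_eq_zero {s W N : ℕ} {f : ℕ → ℤ} (hf : ∀ w < W, |f w| < 2 ^ s)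
    (hN : (N : ℤ) = packing (2 ^ (s + 1)) W f)
    (hland : N &&& 2 ^ s * ∑ w ∈ Finset.range W, (2 ^ (s + 1)) ^ w = 0) :
    ∀ w < W, 0 ≤ f w := by
  induction W generalizing f N with
  | zero => simp
  | succ W ih =>
    rw [packing_succ] at hN
    obtain ⟨hlow, hhigh⟩ := land_mask_succ_eq_zero hland
    have hmod := lt_two_pow_of_land_two_pow_eq_zero (N.mod_lt (by positivity)) hlow
    have hN' := congrArg ((↑) : ℕ → ℤ) (N.div_add_mod (2 ^ (s + 1)))
    push_cast at hN'
    have hdigit : f 0 = (N % 2 ^ (s + 1) : ℕ) := by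
      refine sub_eq_zero.1 (Int.eq_zero_of_abs_lt_dvd (m := 2 ^ (s + 1))
        ⟨N / 2 ^ (s + 1) - packing (2 ^ (s + 1)) W (fun w ↦ f (w + 1)), ?_⟩ ?_)
      · push_cast
        linarith
      · have := abs_lt.1 (hf 0 W.succ_pos)
        zify at hmod
        rw [abs_lt, pow_succ]
        constructor <;> lia
    intro w hw
    cases w with
    | zero => exact hdigit ▸ Int.natCast_nonneg _
    | succ w =>
      refine ih (fun w hw ↦ hf (w + 1) (by lia)) ?_ hhigh w (by lia)
      refine mul_left_cancel₀ (pow_ne_zero (s + 1) two_ne_zero) ?_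
      push_cast at hdigit ⊢
      linarith

end Packing

section Certificate

/-- The pairs `(d, u)` of Chebyshev's method for `content (17 * k) (5 * k)`: they define
`floorCombination`. Found by linear programming, maximizing `-∑ u * log d`. -/
def floorWeights : List (ℕ × ℤ) :=
  [(17, 50000), (20, -42500), (25, 34000), (30, -28333), (34, -25000), (40, 21250), (50, -17000),
   (51, -16667), (55, 15455), (60, 14167), (65, 13077), (68, -12500), (75, -11333), (95, 8947),
   (102, 8333), (110, -7727), (119, -175), (120, -6910), (130, -13077), (135, 6296), (140, 6071),
   (150, 11333), (155, 4592), (160, -4448), (170, -5000), (175, -4857), (180, 4722), (190, -8947),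
   (200, -4250), (204, 4167), (210, 4048), (220, 1641), (221, -1633), (225, 3778), (230, -3696),
   (235, 3617), (238, -3484), (240, 3455), (255, 3333), (260, 2598), (265, 828), (270, -166),
   (272, 1446), (275, -4522), (280, -3036), (285, -2982), (289, -318), (290, -2614), (295, 2881),
   (300, -2833), (305, 2057), (306, -2050), (310, -2296), (320, 443), (323, -867), (325, -2615),
   (335, 2537), (340, 5000), (350, 1856), (355, 565), (357, 1851), (360, -1836), (380, 4296),
   (385, -2032), (390, 2179), (400, 1289), (405, -2099), (408, -769), (410, 160), (415, 704),
   (420, -4048), (425, -1311), (430, -5), (435, 994), (440, -1803), (442, 817), (450, -1889),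
   (455, -1868), (459, 1610), (460, 1551), (465, -1332), (470, -1479), (475, -1789), (476, 1786),
   (480, 1483), (493, -1724), (505, 1683), (520, 336), (525, 1140), (527, -755), (530, -792),
   (535, 392), (540, -1880), (544, 839), (550, 2223), (560, 37), (565, 561), (570, 2587),
   (580, 1307), (590, -1441), (595, 35), (600, 1152), (605, -921), (610, -1282), (612, 555),
   (620, 935), (625, -468), (630, -1349), (640, 433), (646, 887), (650, 2615), (655, -194),
   (660, -61), (670, -2151), (675, -136), (680, -1250), (690, 221), (695, 432), (700, 112),
   (705, -873), (710, -693), (714, -671), (715, -639), (720, -568), (725, -869), (730, -42),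
   (731, -1121), (735, 1156), (745, 808), (750, -361), (755, 236), (760, -1356), (765, 682),
   (775, -918), (780, -866), (795, -276), (800, 245), (805, 1056), (810, 55), (816, -98),
   (820, 957), (825, 123), (833, -995), (835, 1018), (840, 987), (850, 650), (855, 5), (860, 991),
   (867, 15), (870, 192), (880, 334), (884, 92), (895, -297), (900, 135), (905, -324), (910, 192),
   (918, -726), (920, -40), (925, -331), (930, 720), (935, 517), (940, -368), (945, -74),
   (950, 1086), (952, -636), (960, -215), (965, 304), (969, 127), (975, 90), (980, -535),
   (986, 719), (995, 363), (1000, 335), (1003, -855), (1020, -662), (1037, -378), (1054, 378),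
   (1088, -654), (1105, 19), (1122, -425), (1139, -1235), (1156, 1492), (1190, 594), (1207, -126),
   (1224, 375), (1241, -582), (1292, 348), (1326, 175), (1343, 293), (1360, 246), (1377, -149),
   (1394, -66), (1428, 547), (1445, 449), (1479, 95), (1513, 191), (1530, 57), (1547, 289),
   (1564, 273), (1581, -168), (1615, -37), (1632, -64), (1649, -564), (1666, -188), (1700, -1161)]

/-- The pairs `(t, e)` for which `850000 * oddIndicator + ∑ e * [t ≤ w]` dominates
`floorCombination`. -/
def stepWeights : List (ℕ × ℕ) :=
  [(30, 10), (55, 8), (60, 35), (75, 35), (204, 104), (221, 257), (355, 54), (440, 476),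
   (530, 309), (1050, 1796758), (1241, 909), (2665, 128889), (2675, 209720), (2680, 258725),
   (2686, 127684), (2695, 67972), (5885, 200912), (6025, 393918), (9185, 1046963), (9200, 342504),
   (33925, 22750), (37150, 466781), (37250, 757005), (90585, 915418), (136000, 54967729)]

/-- `w ↦ ∑ u * d * ⌊w / d⌋` over the pairs `(d, u)` of `floorWeights`. -/
def floorCombination (w : ℕ) : ℤ :=
  (floorWeights.map fun p ↦ p.2 * p.1 * ((w / p.1 : ℕ) : ℤ)).sum

/-- The indicator function which `vonMangoldtSum (170 * k)` sends, up to a logarithm, to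
`log (content (17 * k) (5 * k))`. -/
def oddIndicator (w : ℕ) : ℤ :=
  if Odd (w / 17) ∧ Odd (w / 5) then 1 else 0

/-- `w ↦ ∑ e * [t ≤ w]` over the pairs `(t, e)` of `stepWeights`. -/
def stepCombination (w : ℕ) : ℤ :=
  (stepWeights.map fun p ↦ (p.2 : ℤ) * if p.1 ≤ w then 1 else 0).sum

/-- `∑ k < n, b ^ k`, in closed form for evaluation by the kernel. -/
def geomSum (b n : ℕ) : ℕ := (b ^ n - 1) / (b - 1)

/-- The value of `packing B W (850000 * oddIndicator + stepCombination - floorCombination)` in a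
form that the kernel evaluates with few operations on large numbers. -/
def packedMargin (B W : ℕ) : ℤ :=
  (850000 * ((B - 1 : ℕ) * ((∑ w ∈ Finset.range 170, (B ^ w : ℕ) * oddIndicator w) *
      (geomSum (B ^ 170) (W / 170) : ℕ))) +
    (stepWeights.map fun p ↦ p.2 * (((B ^ W : ℕ) : ℤ) - (B ^ p.1 : ℕ))).sum -
    (floorWeights.map fun p ↦ p.2 * p.1 * ((W / p.1 * B ^ W : ℕ) -
      ((B ^ p.1 * geomSum (B ^ p.1) (W / p.1) : ℕ) : ℤ))).sum) / ((B - 1 : ℕ) : ℤ)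

theorem geomSum_eq {b : ℕ} (hb : 2 ≤ b) (n : ℕ) :
    geomSum b n = ∑ k ∈ Finset.range n, b ^ k :=
  (Nat.geomSum_eq hb n).symm

theorem map_fun_list_sum {R ι : Type*} [CommSemiring R] (L : (ℕ → R) →ₗ[R] R) (l : List ι)
    (c : ι → R) (f : ι → ℕ → R) :
    L (fun w ↦ (l.map fun i ↦ c i * f i w).sum) = (l.map fun i ↦ c i * L (f i)).sum := by
  have hsum : (fun w ↦ (l.map fun i ↦ c i * f i w).sum) = (l.map fun i ↦ c i • f i).sum := by
    ext w
    simp [Pi.list_sum_apply, Function.comp_def]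
  simp [hsum, map_list_sum, Function.comp_def]

theorem periodic_oddIndicator : Function.Periodic oddIndicator 170 := by
  intro w
  have h17 : (w + 170) / 17 = w / 17 + 2 * 5 := by lia
  have h5 : (w + 170) / 5 = w / 5 + 2 * 17 := by lia
  simp only [oddIndicator, h17, h5, Nat.odd_add, even_two_mul, iff_true]

set_option exponentiation.threshold 100000000 in
theorem packedMargin_nonneg_and_land_eq_zero :
    0 ≤ packedMargin (2 ^ (28 + 1)) 136000 ∧
      (packedMargin (2 ^ (28 + 1)) 136000).toNat &&&
        2 ^ 28 * geomSum (2 ^ (28 + 1)) 136000 = 0 := by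
  decide +kernel

theorem sum_floorWeights : (floorWeights.map Prod.snd).sum = 0 := by
  decide +kernel

theorem sum_negPart_floorWeights :
    (floorWeights.map fun p ↦ max (-p.2) 0 * ((p.1 : ℤ) - 1)).sum = 61705925 := by
  decide +kernel

theorem sum_posPart_floorWeights :
    (floorWeights.map fun p ↦ max p.2 0 * ((p.1 : ℤ) - 1)).sum ≤ 62000000 := by
  decide +kernel

theorem sum_stepWeights : (stepWeights.map fun p ↦ (p.2 : ℤ)).sum = 61705925 := by
  decide +kernel

theorem mem_floorWeights : ∀ p ∈ floorWeights, 17 ≤ p.1 ∧ p.1 ≤ 1700 := by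
  decide +kernel

theorem mem_stepWeights : ∀ p ∈ stepWeights, p.1 ≠ 0 ∧ p.1 ≤ 136000 := by
  decide +kernel

theorem packedMargin_eq_packing {B W : ℕ} (hB : 2 ≤ B) (hW : 170 ∣ W)
    (hsteps : ∀ p ∈ stepWeights, p.1 ≤ W) :
    packedMargin B W = packing B W
      (fun w ↦ 850000 * oddIndicator w + stepCombination w - floorCombination w) := by
  have hodd : ((B - 1 : ℕ) : ℤ) * ((∑ w ∈ Finset.range 170,
      ((B ^ w : ℕ) : ℤ) * oddIndicator w) * (geomSum (B ^ 170) (W / 170) : ℕ)) =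
      (B - 1) * packing B W oddIndicator := by
    obtain ⟨m, rfl⟩ := hW
    rw [Nat.mul_div_cancel_left m (by norm_num), packing_periodic _ periodic_oddIndicator,
      geomSum_eq (hB.trans (Nat.le_self_pow (by norm_num) B)), packing_apply,
      Nat.cast_pred (by lia)]
    push_cast
    rfl
  have hstep : (stepWeights.map fun p ↦ (p.2 : ℤ) * (((B ^ W : ℕ) : ℤ) - (B ^ p.1 : ℕ))).sum =
      (B - 1) * packing B W stepCombination := by
    unfold stepCombination
    rw [map_fun_list_sum, ← List.sum_map_mul_left]
    refine congrArg List.sum (List.map_congr_left fun p hp ↦ ?_)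
    rw [mul_left_comm, packing_indicator_le _ (hsteps p hp)]
    push_cast
    rfl
  have hfloor : (floorWeights.map fun p ↦ p.2 * p.1 * (((W / p.1 * B ^ W : ℕ) : ℤ) -
      ((B ^ p.1 * geomSum (B ^ p.1) (W / p.1) : ℕ) : ℤ))).sum =
      (B - 1) * packing B W floorCombination := by
    unfold floorCombination
    rw [map_fun_list_sum, ← List.sum_map_mul_left]
    refine congrArg List.sum (List.map_congr_left fun p hp ↦ ?_)
    have hp : p.1 ≠ 0 := by linarith [(mem_floorWeights p hp).1]
    rw [mul_left_comm, packing_div, Nat.cast_mul, Nat.cast_mul,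
      geomSum_eq (hB.trans (Nat.le_self_pow hp B))]
    push_cast
    rfl
  have hadd : packing B W
      (fun w ↦ 850000 * oddIndicator w + stepCombination w - floorCombination w) =
      850000 * packing B W oddIndicator + packing B W stepCombination -
        packing B W floorCombination := by
    simp only [packing_apply, mul_add, mul_sub, Finset.sum_add_distrib, Finset.sum_sub_distrib,
      Finset.mul_sum, mul_left_comm]
  rw [packedMargin, hodd, hstep, hfloor, hadd, Nat.cast_pred (by lia)]
  refine Int.ediv_eq_of_eq_mul_right (by lia) ?_
  ring

theorem floorCombination_eq_sum_neg_mul_mod (w : ℕ) :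
    floorCombination w = (floorWeights.map fun p ↦ -p.2 * ((w % p.1 : ℕ) : ℤ)).sum := by
  have hsum : (floorWeights.map fun p ↦ p.2 * (w : ℤ)).sum = 0 := by
    rw [List.sum_map_mul_right, sum_floorWeights, zero_mul]
  rw [floorCombination, ← add_zero (List.sum (floorWeights.map fun p ↦ -p.2 * _)), ← hsum,
    ← List.sum_map_add]
  refine congrArg List.sum (List.map_congr_left fun p _ ↦ ?_)
  have := congrArg ((↑) : ℕ → ℤ) (Nat.div_add_mod w p.1)
  rw [Nat.cast_add, Nat.cast_mul] at this
  linear_combination p.2 * this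

theorem floorCombination_le (w : ℕ) : floorCombination w ≤ 61705925 := by
  rw [floorCombination_eq_sum_neg_mul_mod, ← sum_negPart_floorWeights]
  refine List.sum_le_sum fun p hp ↦ ?_
  have hmod : ((w % p.1 : ℕ) : ℤ) ≤ p.1 - 1 := by
    have := Nat.mod_lt w (show 0 < p.1 by linarith [(mem_floorWeights p hp).1])
    lia
  exact mul_le_mul (le_max_left _ _) hmod (Int.natCast_nonneg _) (le_max_right _ _)

theorem neg_le_floorCombination (w : ℕ) : -62000000 ≤ floorCombination w := by
  rw [floorCombination_eq_sum_neg_mul_mod, neg_le_iff_add_nonneg']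
  refine le_trans ?_ (add_le_add_left sum_posPart_floorWeights _)
  rw [← List.sum_map_add]
  refine List.sum_nonneg fun c hc ↦ ?_
  obtain ⟨p, hp, rfl⟩ := List.mem_map.1 hc
  have hmod : ((w % p.1 : ℕ) : ℤ) ≤ p.1 - 1 := by
    have := Nat.mod_lt w (show 0 < p.1 by linarith [(mem_floorWeights p hp).1])
    lia
  rw [neg_mul, ← sub_eq_add_neg, sub_nonneg]
  exact mul_le_mul (le_max_left _ _) hmod (Int.natCast_nonneg _) (le_max_right _ _)

theorem stepCombination_nonneg (w : ℕ) : 0 ≤ stepCombination w := by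
  refine List.sum_nonneg fun c hc ↦ ?_
  obtain ⟨p, -, rfl⟩ := List.mem_map.1 hc
  split_ifs <;> simp

theorem stepCombination_le (w : ℕ) : stepCombination w ≤ 61705925 := by
  rw [← sum_stepWeights]
  refine List.sum_le_sum fun p _ ↦ ?_
  split_ifs <;> simp

theorem oddIndicator_nonneg (w : ℕ) : 0 ≤ oddIndicator w := by
  unfold oddIndicator
  split_ifs <;> simp

theorem oddIndicator_le_one (w : ℕ) : oddIndicator w ≤ 1 := by
  unfold oddIndicator
  split_ifs <;> simp

theorem margin_nonneg_of_land_packedMargin_eq_zero {s W : ℕ} (hs : 28 ≤ s) (hW : 170 ∣ W)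
    (hsteps : ∀ p ∈ stepWeights, p.1 ≤ W) (hnonneg : 0 ≤ packedMargin (2 ^ (s + 1)) W)
    (hland : (packedMargin (2 ^ (s + 1)) W).toNat &&& 2 ^ s * geomSum (2 ^ (s + 1)) W = 0) :
    ∀ w < W, 0 ≤ 850000 * oddIndicator w + stepCombination w - floorCombination w := by
  have hB : 2 ≤ 2 ^ (s + 1) := Nat.le_self_pow s.succ_ne_zero 2
  have hpacking := packedMargin_eq_packing hB hW hsteps
  rw [geomSum_eq hB] at hland
  refine nonneg_of_land_eq_zero (fun w _ ↦ ?_)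
    ((Int.toNat_of_nonneg hnonneg).trans (mod_cast hpacking)) hland
  refine lt_of_lt_of_le ?_ (pow_le_pow_right₀ one_le_two hs)
  rw [abs_lt]
  constructor <;> linarith [floorCombination_le w, neg_le_floorCombination w,
    stepCombination_le w, stepCombination_nonneg w, oddIndicator_le_one w, oddIndicator_nonneg w]

theorem floorCombination_le_oddIndicator_add_stepCombination (w : ℕ) :
    floorCombination w ≤ 850000 * oddIndicator w + stepCombination w := by
  rcases lt_or_ge w 136000 with hw | hw
  · obtain ⟨hnonneg, hland⟩ := packedMargin_nonneg_and_land_eq_zero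
    exact sub_nonneg.1 (margin_nonneg_of_land_packedMargin_eq_zero le_rfl (by norm_num)
      (fun p hp ↦ (mem_stepWeights p hp).2) hnonneg hland w hw)
  · have hstep : stepCombination w = 61705925 := by
      rw [stepCombination, ← sum_stepWeights]
      refine congrArg List.sum (List.map_congr_left fun p hp ↦ ?_)
      rw [if_pos ((mem_stepWeights p hp).2.trans hw), mul_one]
    linarith [floorCombination_le w, oddIndicator_nonneg w]

theorem sum_abs_mul_floorWeights :
    (floorWeights.map fun p ↦ |p.2| * (p.1 : ℤ)).sum = 123836300 := by
  decide +kernel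

theorem sum_div_stepWeights_le : (stepWeights.map fun p ↦ (p.2 : ℚ) / p.1).sum ≤ 2711.6 := by
  norm_num [stepWeights]

set_option exponentiation.threshold 300000 in
theorem prod_floorWeights_le :
    (floorWeights.map fun p ↦ p.1 ^ p.2.toNat).prod * 27182818286 ^ 17067 ≤
      (floorWeights.map fun p ↦ p.1 ^ (-p.2).toNat).prod * 10 ^ (10 * 17067) := by
  decide +kernel

theorem log_prod_pow {ι : Type*} (l : List ι) {f : ι → ℕ} (hf : ∀ i ∈ l, f i ≠ 0) (k : ι → ℕ) :
    Real.log (l.map fun i ↦ f i ^ k i).prod = (l.map fun i ↦ k i * Real.log (f i)).sum := by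
  rw [Nat.cast_list_prod, Real.log_list_prod, List.map_map, List.map_map]
  · simp [Function.comp_def]
  · simpa using fun i hi h ↦ (hf i hi h).elim

theorem sum_mul_log_floorWeights_le :
    (floorWeights.map fun p ↦ (p.2 : ℝ) * Real.log p.1).sum ≤ -17067 := by
  have hne : ∀ p ∈ floorWeights, p.1 ≠ 0 := fun p hp ↦ by linarith [(mem_floorWeights p hp).1]
  have hprod : (((floorWeights.map fun p ↦ p.1 ^ p.2.toNat).prod : ℕ) : ℝ) *
      27182818286 ^ 17067 ≤
      (floorWeights.map fun p ↦ p.1 ^ (-p.2).toNat).prod * (10 ^ 10) ^ 17067 := by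
    rw [← pow_mul]
    exact_mod_cast prod_floorWeights_le
  have hpos (k : ℕ × ℤ → ℕ) : (0 : ℝ) < (floorWeights.map fun p ↦ p.1 ^ k p).prod := by
    refine Nat.cast_pos.2 (List.prod_pos fun c hc ↦ ?_)
    obtain ⟨p, hp, rfl⟩ := List.mem_map.1 hc
    exact Nat.pow_pos (Nat.pos_of_ne_zero (hne p hp))
  have hlog := Real.log_le_log (mul_pos (hpos _) (by positivity)) hprod
  rw [Real.log_mul (hpos _).ne' (by positivity), Real.log_mul (hpos _).ne' (by positivity),
    log_prod_pow _ hne, log_prod_pow _ hne, Real.log_pow, Real.log_pow] at hlog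
  have hexp : 1 ≤ Real.log 27182818286 - Real.log (10 ^ 10) := by
    rw [← Real.log_div (by simp) (by simp), Real.le_log_iff_exp_le (by norm_num)]
    exact Real.exp_one_lt_d9.le.trans (by norm_num)
  have hsplit : (floorWeights.map fun p ↦ (p.2.toNat : ℝ) * Real.log p.1).sum =
      (floorWeights.map fun p ↦ (p.2 : ℝ) * Real.log p.1).sum +
        (floorWeights.map fun p ↦ ((-p.2).toNat : ℝ) * Real.log p.1).sum := by
    rw [← List.sum_map_add]
    refine congrArg List.sum (List.map_congr_left fun p _ ↦ ?_)
    have hu : (p.2.toNat : ℝ) = p.2 + (-p.2).toNat := by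
      exact_mod_cast (by lia : (p.2.toNat : ℤ) = p.2 + (-p.2).toNat)
    rw [hu, add_mul]
  push_cast at hlog
  linarith

theorem le_sum_mul_log_factorial {N M : ℝ} (hN : 0 < N) {l : List (ℕ × ℤ)}
    (hl : ∀ p ∈ l, p.1 ≠ 0 ∧ p.1 ≤ N ∧ Real.log (N / p.1) ≤ M) (hsum : (l.map Prod.snd).sum = 0) :
    -N * (l.map fun p ↦ (p.2 : ℝ) * Real.log p.1).sum -
        (M / 2 + 1) * (l.map fun p ↦ |p.2| * (p.1 : ℤ)).sum ≤
      (l.map fun p ↦ (p.2 * p.1 : ℝ) * Real.log ⌊N / p.1⌋₊ !).sum := by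
  have hterm : ∀ p ∈ l, N * (Real.log N - 1) * (p.2 : ℝ) + -N * (p.2 * Real.log p.1) +
      -(M / 2 + 1) * (|p.2| * (p.1 : ℤ) : ℤ) ≤
      (p.2 * p.1 : ℝ) * Real.log ⌊N / p.1⌋₊ ! := by
    intro p hp
    obtain ⟨hp0, hpN, hpM⟩ := hl p hp
    have hp0' : (0 : ℝ) < p.1 := mod_cast Nat.pos_of_ne_zero hp0
    have hstirling := abs_log_factorial_floor_sub_le ((one_le_div hp0').2 hpN)
    have herror := mul_le_mul_of_nonneg_left
      (hstirling.trans (by linarith : Real.log (N / p.1) / 2 + 1 ≤ M / 2 + 1))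
      (abs_nonneg (p.2 * p.1 : ℝ))
    rw [← abs_mul, mul_sub, abs_mul, abs_of_pos hp0', Real.log_div hN.ne' hp0'.ne'] at herror
    have hmain : (p.2 * p.1 : ℝ) * (N / p.1 * (Real.log N - Real.log p.1) - N / p.1) =
        N * (Real.log N - 1) * p.2 - N * (p.2 * Real.log p.1) := by
      field_simp
      ring
    rw [hmain] at herror
    push_cast
    linarith [neg_le_of_abs_le herror]
  refine le_trans (le_of_eq ?_) (List.sum_le_sum hterm)
  rw [List.sum_map_add, List.sum_map_add, List.sum_map_mul_left, List.sum_map_mul_left,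
    List.sum_map_mul_left]
  have hsum' : (l.map fun p ↦ (p.2 : ℝ)).sum = 0 := by
    have := congrArg ((↑) : ℤ → ℝ) hsum
    rwa [Int.cast_list_sum, List.map_map, Int.cast_zero] at this
  rw [hsum', Int.cast_list_sum, List.map_map]
  simp only [Function.comp_def]
  ring

set_option exponentiation.threshold 3000 in
theorem log_ten_mul_le {K : ℕ} (hK : 30000 ≤ K) :
    Real.log (10 * K) ≤ 631 / 50 + (K / 30000 - 1) := by
  have h := log_le_add_div_sub_one (x := 10 * K) (y := 300000) (by positivity) (by norm_num)
    (log_le_div_of_pow_le (by norm_num) 631 (q := 50) (by simp) (by norm_num))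
  norm_num at h ⊢
  linarith

theorem vonMangoldtSum_stepCombination_le (N : ℕ) :
    vonMangoldtSum N (fun w ↦ (stepCombination w : ℝ)) ≤ 1.12 * N * 2711.6 := by
  have hcast (w : ℕ) : (stepCombination w : ℝ) =
      (stepWeights.map fun p ↦ (p.2 : ℝ) * if p.1 ≤ w then 1 else 0).sum := by
    rw [stepCombination, Int.cast_list_sum, List.map_map]
    simp [Function.comp_def]
  simp only [hcast]
  rw [map_fun_list_sum]
  calc (stepWeights.map fun p ↦ (p.2 : ℝ) *
        vonMangoldtSum N (fun w ↦ if p.1 ≤ w then 1 else 0)).sum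
      ≤ (stepWeights.map fun p ↦ 1.12 * N * ((p.2 : ℝ) / p.1)).sum := by
        refine List.sum_le_sum fun p hp ↦ ?_
        rw [vonMangoldtSum_indicator_le N (mem_stepWeights p hp).1]
        refine (mul_le_mul_of_nonneg_left (psi_le_mul (by positivity)) (by positivity)).trans_eq ?_
        ring
    _ = 1.12 * N * ((stepWeights.map fun p ↦ (p.2 : ℚ) / p.1).sum : ℚ) := by
        rw [List.sum_map_mul_left, Rat.cast_list_sum, List.map_map]
        simp [Function.comp_def]
    _ ≤ 1.12 * N * 2711.6 := by
        gcongr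
        refine ((Rat.cast_le (K := ℝ)).2 sum_div_stepWeights_le).trans_eq ?_
        norm_num

theorem le_vonMangoldtSum_floorCombination {K : ℕ} (hK : 10 ≤ K) :
    17067 * (170 * K) - (Real.log (10 * K) / 2 + 1) * 123836300 ≤
      vonMangoldtSum (170 * K) (fun w ↦ (floorCombination w : ℝ)) := by
  have hcast (w : ℕ) : (floorCombination w : ℝ) =
      (floorWeights.map fun p ↦ (p.2 * p.1 : ℝ) * ((w / p.1 : ℕ) : ℝ)).sum := by
    rw [floorCombination, Int.cast_list_sum, List.map_map]
    simp only [Function.comp_def, Int.cast_mul, Int.cast_natCast]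
  simp only [hcast]
  rw [map_fun_list_sum]
  simp only [vonMangoldtSum_div]
  have hfactorial := le_sum_mul_log_factorial (N := (170 * K : ℕ)) (M := Real.log (10 * K))
    (l := floorWeights) (by positivity) (fun p hp ↦ ?_) sum_floorWeights
  · rw [sum_abs_mul_floorWeights] at hfactorial
    have := mul_le_mul_of_nonneg_left sum_mul_log_floorWeights_le
      (by positivity : (0 : ℝ) ≤ 170 * K)
    push_cast at hfactorial ⊢
    linarith
  · obtain ⟨hlower, hupper⟩ := mem_floorWeights p hp
    have hp0 : (17 : ℝ) ≤ p.1 := mod_cast hlower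
    refine ⟨by lia, mod_cast (by lia : p.1 ≤ 170 * K), Real.log_le_log (by positivity) ?_⟩
    rw [div_le_iff₀ (by positivity)]
    push_cast
    nlinarith

theorem mul_le_log_content {K : ℕ} (hK : 30000 ≤ K) :
    2.765 * K ≤ Real.log (content (17 * K) (5 * K)) := by
  have hK' : (30000 : ℝ) ≤ K := mod_cast hK
  have hmono : vonMangoldtSum (170 * K) (fun w ↦ (floorCombination w : ℝ)) ≤
      850000 * vonMangoldtSum (170 * K) (fun w ↦ if Odd (w / 17) ∧ Odd (w / 5) then 1 else 0) +
        vonMangoldtSum (170 * K) (fun w ↦ (stepCombination w : ℝ)) := by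
    rw [← smul_eq_mul (850000 : ℝ), ← map_smul, ← map_add]
    refine vonMangoldtSum_mono _ fun w _ ↦ ?_
    have := floorCombination_le_oddIndicator_add_stepCombination w
    rw [oddIndicator] at this
    simpa using (Int.cast_le (R := ℝ)).2 this
  have hfloor := le_vonMangoldtSum_floorCombination (by lia : 10 ≤ K)
  have hstep := vonMangoldtSum_stepCombination_le (170 * K)
  have hodd := vonMangoldtSum_odd_div_le (s := 17) (t := 5) (by simp) (by simp) (by lia : K ≠ 0)
  have hlog := log_ten_mul_le hK
  norm_num at hstep hodd hlog ⊢
  linarith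

end Certificate

section MidRange

/-- The `k`-th exponent `p` at which the binary digits of `2 ^ p * √2` are inspected; the ratio of
consecutive exponents is at most `1.4`. -/
def checkpoint (k : ℕ) : ℕ :=
  (fun p ↦ 7 * p / 5)^[k] 256

/-- Newton's iteration for `⌊2 ^ B * √2⌋`, started at `1.5 * 2 ^ B`; twenty-four steps are enough
for every `B` used below. -/
def newtonSqrtTwo (B : ℕ) : ℕ :=
  (fun s ↦ (s + 2 ^ (2 * B + 1) / s) / 2)^[24] (3 * 2 ^ (B - 1))

/-- `s = ⌊2 ^ B * √2⌋`, and the last sixteen binary digits of `s` are neither all `0` nor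
all `1`. -/
def HasMargin (s B : ℕ) : Prop :=
  s ^ 2 ≤ 2 ^ (2 * B + 1) ∧ 2 ^ (2 * B + 1) < (s + 1) ^ 2 ∧
    1 ≤ s % 2 ^ 16 ∧ s % 2 ^ 16 < 2 ^ 16 - 1

instance (s B : ℕ) : Decidable (HasMargin s B) := by
  unfold HasMargin; infer_instance

set_option exponentiation.threshold 20000000 in
theorem hasMargin_checkpoint :
    ∀ k < 31, HasMargin (newtonSqrtTwo (checkpoint k + 16)) (checkpoint k + 16) := by
  decide +kernel

theorem exists_checkpoint {m : ℕ} (hm : 256 ≤ m) (hm' : m < 6150000) :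
    ∃ k < 31, m ≤ checkpoint k ∧ 5 * checkpoint k ≤ 7 * m := by
  have hlast : m ≤ checkpoint 30 := hm'.le.trans (by decide +kernel)
  have hex : ∃ k, m ≤ checkpoint k := ⟨30, hlast⟩
  refine ⟨Nat.find hex, Nat.lt_succ_of_le (Nat.find_min' hex hlast), Nat.find_spec hex, ?_⟩
  rcases hk : Nat.find hex with _ | j
  · exact (show 5 * checkpoint 0 ≤ 7 * 256 by decide).trans (by lia)
  · have hj : ¬ m ≤ checkpoint j := Nat.find_min hex (by lia)
    have hsucc : checkpoint (j + 1) = 7 * checkpoint j / 5 := Function.iterate_succ_apply' ..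
    lia

theorem sq_two_pow_mul_sqrt_two (p : ℕ) : ((2 : ℝ) ^ p * √2) ^ 2 = 2 ^ (2 * p + 1) := by
  rw [mul_pow, Real.sq_sqrt two_pos.le, ← pow_mul, ← pow_succ, mul_comm p]

theorem HasMargin.one_le_abs_sub {s B : ℕ} (h : HasMargin s B) (Y : ℕ) :
    1 ≤ |2 ^ 16 * (Y : ℝ) - 2 ^ B * √2| := by
  obtain ⟨hle, hlt, hmod, hmod'⟩ := h
  have hs : (s : ℝ) ≤ 2 ^ B * √2 := by
    refine le_of_sq_le_sq ?_ (by positivity)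
    rw [sq_two_pow_mul_sqrt_two]
    exact_mod_cast hle
  have hs' : 2 ^ B * √2 < (s : ℝ) + 1 := by
    refine lt_of_pow_lt_pow_left₀ 2 (by positivity) ?_
    rw [sq_two_pow_mul_sqrt_two]
    exact_mod_cast hlt
  rcases (show 2 ^ 16 * Y + 1 ≤ s ∨ s + 2 ≤ 2 ^ 16 * Y by lia) with hY | hY
  · have hY' : 2 ^ 16 * (Y : ℝ) + 1 ≤ s := mod_cast hY
    rw [abs_sub_comm]
    exact (by linarith : (1 : ℝ) ≤ _).trans (le_abs_self _)
  · have hY' : (s : ℝ) + 2 ≤ 2 ^ 16 * Y := mod_cast hY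
    exact (by linarith : (1 : ℝ) ≤ _).trans (le_abs_self _)

theorem two_rpow_lt_abs_sub_of_lt {m : ℕ} (hm : 256 ≤ m) (hm' : m < 6150000) (X : ℕ) :
    (2 : ℝ) ^ (-(0.48 : ℝ) * m) < |X - 2 ^ m * √2| := by
  obtain ⟨k, hk, hmk, hkm⟩ := exists_checkpoint hm hm'
  have hmargin := (hasMargin_checkpoint k hk).one_le_abs_sub (2 ^ (checkpoint k - m) * X)
  generalize checkpoint k = p at hmk hkm hmargin
  obtain ⟨t, rfl⟩ := Nat.exists_eq_add_of_le hmk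
  have hscale : (2 : ℝ) ^ 16 * ((2 ^ (m + t - m) * X : ℕ) : ℝ) - 2 ^ (m + t + 16) * √2 =
      2 ^ (t + 16) * (X - 2 ^ m * √2) := by
    rw [Nat.add_sub_cancel_left]
    push_cast
    ring
  rw [hscale, abs_mul, abs_of_pos (by positivity)] at hmargin
  have hpow : (2 : ℝ) ^ (t + 16) < 2 ^ ((0.48 : ℝ) * m) := by
    rw [← Real.rpow_natCast]
    refine Real.rpow_lt_rpow_of_exponent_lt one_lt_two ?_
    have hm₀ : (256 : ℝ) ≤ m := mod_cast hm
    have ht : (5 : ℝ) * (m + t) ≤ 7 * m := mod_cast hkm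
    push_cast
    linarith
  rw [neg_mul, Real.rpow_neg two_pos.le, inv_lt_iff_one_lt_mul₀' (by positivity)]
  have hpos : 0 < |(X : ℝ) - 2 ^ m * √2| :=
    pos_of_mul_pos_right (zero_lt_one.trans_le hmargin) (by positivity)
  exact hmargin.trans_lt (mul_lt_mul_of_pos_right hpow hpos)

end MidRange

section Separation

/-- The bound `2 ^ (0.26 * n) < |X ^ 2 - 2 ^ n|` raised to the power `50`, which turns it into a
decidable statement about integers. -/
def IsSeparated (n X : ℕ) : Prop :=
  2 ^ (13 * n) < ((X : ℤ) ^ 2 - 2 ^ n).natAbs ^ 50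

instance (n X : ℕ) : Decidable (IsSeparated n X) := by
  unfold IsSeparated; infer_instance

variable {n X Y : ℕ}

theorem isSeparated_iff :
    IsSeparated n X ↔ (2 : ℝ) ^ ((0.26 : ℝ) * n) < (|(X : ℤ) ^ 2 - 2 ^ n| : ℤ) := by
  have hpow : ((2 : ℝ) ^ ((0.26 : ℝ) * n)) ^ 50 = 2 ^ (13 * n) := by
    rw [← Real.rpow_mul_natCast two_pos.le, ← Real.rpow_natCast]
    congr 1
    push_cast
    ring
  rw [IsSeparated, Int.abs_eq_natAbs, Int.cast_natCast,
    ← pow_lt_pow_iff_left₀ (a := (2 : ℝ) ^ _) (by positivity) (by positivity) (by simp : 50 ≠ 0),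
    hpow]
  norm_cast

theorem IsSeparated.mono (h : IsSeparated n X)
    (hXY : ((X : ℤ) ^ 2 - 2 ^ n).natAbs ≤ ((Y : ℤ) ^ 2 - 2 ^ n).natAbs) : IsSeparated n Y :=
  h.trans_le (Nat.pow_le_pow_left hXY 50)

theorem IsSeparated.of_le_of_sq_le (h : IsSeparated n X) (hYX : Y ≤ X) (hX : X ^ 2 ≤ 2 ^ n) :
    IsSeparated n Y := by
  have hY' : (Y : ℤ) ^ 2 ≤ X ^ 2 := mod_cast Nat.pow_le_pow_left hYX 2
  exact h.mono (by lia)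

theorem IsSeparated.of_ge_of_le_sq (h : IsSeparated n X) (hXY : X ≤ Y) (hX : 2 ^ n ≤ X ^ 2) :
    IsSeparated n Y := by
  have hY' : (X : ℤ) ^ 2 ≤ Y ^ 2 := mod_cast Nat.pow_le_pow_left hXY 2
  exact h.mono (by lia)

/-- The largest odd integer whose square is at most `2 ^ n`. -/
def oddSqrt (n : ℕ) : ℕ :=
  2 * ((Nat.sqrt (2 ^ n) - 1) / 2) + 1

set_option exponentiation.threshold 100000 in
theorem isSeparated_near_oddSqrt :
    ∀ n < 520, 1 < n →
      IsSeparated n (oddSqrt n - 2) ∧ (IsSeparated n (oddSqrt n) ∨ oddSqrt n ^ 2 + 7 = 2 ^ n) ∧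
      (IsSeparated n (oddSqrt n + 2) ∨ (oddSqrt n + 2) ^ 2 = 2 ^ n + 1) ∧
      IsSeparated n (oddSqrt n + 4) := by
  decide +kernel

theorem isSeparated_or_eq_of_lt (hn : 1 < n) (hn' : n < 520) (hX : Odd X) :
    IsSeparated n X ∨ X ^ 2 = 2 ^ n + 1 ∨ X ^ 2 + 7 = 2 ^ n := by
  obtain ⟨hfar, hbelow, habove, hfar'⟩ := isSeparated_near_oddSqrt n hn' hn
  have hsqrt : 0 < Nat.sqrt (2 ^ n) := Nat.sqrt_pos.mpr (by positivity)
  have hle : oddSqrt n ≤ Nat.sqrt (2 ^ n) := by unfold oddSqrt; lia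
  have hlt : Nat.sqrt (2 ^ n) < oddSqrt n + 2 := by unfold oddSqrt; lia
  have hodd : oddSqrt n % 2 = 1 := by unfold oddSqrt; lia
  rw [Nat.odd_iff] at hX
  rcases (show X ≤ oddSqrt n - 2 ∨ X = oddSqrt n ∨ X = oddSqrt n + 2 ∨ oddSqrt n + 4 ≤ X by lia)
    with h | rfl | rfl | h
  · exact .inl (hfar.of_le_of_sq_le h (Nat.le_sqrt'.mp (by lia)))
  · exact hbelow.imp_right .inr
  · exact habove.imp_right .inl
  · exact .inl (hfar'.of_ge_of_le_sq h (Nat.sqrt_lt'.mp (by lia)).le)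

theorem two_pow_le_abs_sq_sub_two_pow {k : ℕ} (hk : k ≠ 0) (hX : Odd X) :
    (2 : ℤ) ^ k ≤ |(X : ℤ) ^ 2 - 2 ^ (2 * k)| := by
  have hne : (X : ℤ) - 2 ^ k ≠ 0 := by
    rw [sub_ne_zero]
    norm_cast
    rintro rfl
    exact Nat.not_odd_iff_even.mpr (even_two.pow_of_ne_zero hk) hX
  have hfactor : (X : ℤ) ^ 2 - 2 ^ (2 * k) = (X - 2 ^ k) * (X + 2 ^ k) := by
    rw [pow_mul']
    ring
  rw [hfactor, abs_mul, abs_of_pos (by positivity : (0 : ℤ) < X + 2 ^ k)]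
  calc (2 : ℤ) ^ k ≤ X + 2 ^ k := le_add_of_nonneg_left (by positivity)
    _ ≤ |(X : ℤ) - 2 ^ k| * (X + 2 ^ k) :=
      le_mul_of_one_le_left (by positivity) (Int.one_le_abs hne)

theorem isSeparated_two_mul {k : ℕ} (hk : k ≠ 0) (hX : Odd X) : IsSeparated (2 * k) X := by
  rw [isSeparated_iff]
  have hk' : (0 : ℝ) < k := by positivity
  calc (2 : ℝ) ^ ((0.26 : ℝ) * (2 * k : ℕ)) < 2 ^ (k : ℝ) := by
        refine Real.rpow_lt_rpow_of_exponent_lt one_lt_two ?_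
        push_cast
        linarith
    _ = 2 ^ k := Real.rpow_natCast 2 k
    _ ≤ _ := mod_cast two_pow_le_abs_sq_sub_two_pow hk hX

theorem isSeparated_of_lt_abs_sub {m : ℕ} (h : (2 : ℝ) ^ (-(0.48 : ℝ) * m) < |X - 2 ^ m * √2|) :
    IsSeparated (2 * m + 1) X := by
  rw [isSeparated_iff]
  have hfactor : (X : ℝ) ^ 2 - 2 ^ (2 * m + 1) = (X - 2 ^ m * √2) * (X + 2 ^ m * √2) := by
    rw [← sq_two_pow_mul_sqrt_two]
    ring
  have hsqrt : (2 : ℝ) ^ (0.26 : ℝ) ≤ √2 := by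
    rw [Real.sqrt_eq_rpow]
    exact Real.rpow_le_rpow_of_exponent_le one_le_two (by norm_num)
  push_cast
  rw [hfactor, abs_mul, abs_of_pos (by positivity : 0 < (X : ℝ) + 2 ^ m * √2)]
  calc (2 : ℝ) ^ ((0.26 : ℝ) * (2 * m + 1))
      = 2 ^ (-(0.48 : ℝ) * m) * (2 ^ m * 2 ^ (0.26 : ℝ)) := by
        rw [← Real.rpow_natCast 2 m, ← Real.rpow_add two_pos, ← Real.rpow_add two_pos]
        congr 1
        ring
    _ ≤ 2 ^ (-(0.48 : ℝ) * m) * (X + 2 ^ m * √2) := by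
        gcongr
        exact (mul_le_mul_of_nonneg_left hsqrt (by positivity)).trans
          (le_add_of_nonneg_left (by positivity))
    _ < |(X : ℝ) - 2 ^ m * √2| * (X + 2 ^ m * √2) := by gcongr

end Separation

section LargeRange

theorem log_add_choose (a b : ℕ) :
    Real.log ((a + b).choose a) = Real.log (a + b)! - Real.log a ! - Real.log b ! := by
  have hchoose : 0 < (a + b).choose b := Nat.choose_pos (Nat.le_add_left b a)
  rw [Nat.choose_symm_add, ← Nat.add_choose_mul_factorial_mul_factorial a b, Nat.cast_mul,
    Nat.cast_mul, Real.log_mul (by positivity) (by positivity),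
    Real.log_mul (by positivity) (by positivity)]
  ring

theorem abs_log_factorial_sub_le {n : ℕ} (hn : n ≠ 0) :
    |Real.log n ! - (n * Real.log n - n)| ≤ Real.log n / 2 + 1 := by
  simpa using abs_log_factorial_floor_sub_le (x := n) (mod_cast Nat.one_le_iff_ne_zero.2 hn)

theorem abs_log_add_choose_sub_le {a b : ℕ} (ha : a ≠ 0) (hb : b ≠ 0) :
    |Real.log ((a + b).choose a) -
      ((a + b) * Real.log (a + b) - a * Real.log a - b * Real.log b)| ≤
      3 / 2 * Real.log (a + b) + 3 := by
  have hab := abs_le.1 (abs_log_factorial_sub_le (n := a + b) (by lia))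
  have ha' := abs_le.1 (abs_log_factorial_sub_le ha)
  have hb' := abs_le.1 (abs_log_factorial_sub_le hb)
  have hlog_a : Real.log a ≤ Real.log (a + b) :=
    Real.log_le_log (by positivity) (le_add_of_nonneg_right (by positivity))
  have hlog_b : Real.log b ≤ Real.log (a + b) :=
    Real.log_le_log (by positivity) (le_add_of_nonneg_left (by positivity))
  push_cast at hab
  rw [log_add_choose, abs_le]
  constructor <;> linarith

set_option exponentiation.threshold 3000 in
theorem entropy_mem_Icc :
    22 * Real.log 22 - 17 * Real.log 17 - 5 * Real.log 5 ∈ Set.Icc (790 / 67 : ℝ) (1073 / 91) := by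
  have hlog : Real.log (22 ^ 22 / (17 ^ 17 * 5 ^ 5)) =
      22 * Real.log 22 - 17 * Real.log 17 - 5 * Real.log 5 := by
    rw [Real.log_div (by norm_num) (by norm_num), Real.log_mul (by norm_num) (by norm_num)]
    simp only [Real.log_pow]
    push_cast
    ring
  rw [← hlog]
  exact ⟨mod_cast div_le_log_of_le_pow (by norm_num) 790 (q := 67) (by simp) (by norm_num),
    mod_cast log_le_div_of_pow_le (by norm_num) 1073 (q := 91) (by simp) (by norm_num)⟩

variable {K : ℕ}

theorem log_twenty_two_mul_le (hK : 30000 ≤ K) : Real.log (22 * K) ≤ 13 + 0.00003 * K := by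
  have hK' : (30000 : ℝ) ≤ K := mod_cast hK
  have hpow : Real.log (2 ^ 20) ≤ 13.87 := by
    rw [Real.log_pow]
    linarith [Real.log_two_lt_d9]
  have := log_le_add_div_sub_one (x := 22 * K) (by positivity) (by positivity) hpow
  norm_num at this ⊢
  linarith

theorem log_choose_mem_Icc (hK : 30000 ≤ K) :
    Real.log ((17 * K + 5 * K).choose (17 * K)) ∈ Set.Icc (11.79 * K : ℝ) (11.7925 * K) := by
  have hK' : (30000 : ℝ) ≤ K := mod_cast hK
  have hlog := log_twenty_two_mul_le hK
  have hchoose := abs_le.1 (abs_log_add_choose_sub_le (a := 17 * K) (b := 5 * K)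
    (by lia) (by lia))
  have hentropy : (17 * K + 5 * K : ℝ) * Real.log (17 * K + 5 * K) - 17 * K * Real.log (17 * K) -
      5 * K * Real.log (5 * K) = K * (22 * Real.log 22 - 17 * Real.log 17 - 5 * Real.log 5) := by
    rw [← add_mul, Real.log_mul (by norm_num) (by positivity),
      Real.log_mul (by norm_num) (by positivity), Real.log_mul (by norm_num) (by positivity)]
    norm_num
    ring
  push_cast at hchoose
  rw [hentropy, ← add_mul, show (17 + 5 : ℝ) = 22 by norm_num] at hchoose
  have hlower := mul_le_mul_of_nonneg_left entropy_mem_Icc.1 K.cast_nonneg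
  have hupper := mul_le_mul_of_nonneg_left entropy_mem_Icc.2 K.cast_nonneg
  constructor <;> linarith

theorem approximation_term_lt {m : ℕ} (hK : 30000 ≤ K) (hm : 51057 * K ≤ 250 * m + 51057) :
    181 * (2 : ℝ) ^ (-(0.48 : ℝ) * m) *
      (2 ^ (17 * (5 * K)) * ((17 * K + 5 * K).choose (17 * K) : ℝ)) <
      Real.exp (2.765 * K) / 2 := by
  have hK' : (30000 : ℝ) ≤ K := mod_cast hK
  have hm' : (51057 : ℝ) * K ≤ 250 * m + 51057 := mod_cast hm
  have hchoose : 0 < (17 * K + 5 * K).choose (17 * K) := Nat.choose_pos (by lia)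
  have hconst : Real.log 181 ≤ 8 := by
    simpa using log_le_div_of_pow_le (x := 181) (by simp) 8 one_ne_zero (by norm_num)
  have hlog := (log_choose_mem_Icc hK).2
  have hexponent : (-0.48 * m + 17 * (5 * K)) * Real.log 2 ≤ 70 - 9.031 * K := by
    calc _ ≤ (99 - 13.0294 * K) * Real.log 2 := by
          gcongr
          linarith
      _ ≤ _ := by nlinarith [Real.log_two_gt_d9, Real.log_two_lt_d9]
  rw [← Real.log_lt_log_iff (by positivity) (by positivity),
    Real.log_div (by positivity) two_ne_zero, Real.log_exp,
    Real.log_mul (by positivity) (by positivity), Real.log_mul (by positivity) (by positivity),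
    Real.log_mul (by positivity) (by positivity), Real.log_pow, Real.log_rpow two_pos]
  push_cast
  linarith [Real.log_two_lt_d9]

theorem le_log_point : -0.0003 ≤ Real.log (32761 / 2 ^ 15) := by
  have := Real.one_sub_inv_le_log_of_pos (show (0 : ℝ) < 32761 / 2 ^ 15 by norm_num)
  norm_num at this ⊢
  linarith

theorem log_one_sub_point_le : Real.log (7 / 2 ^ 15) ≤ 72 / 37 - 15 * Real.log 2 := by
  have hseven : Real.log 7 ≤ 72 / 37 :=
    mod_cast log_le_div_of_pow_le (by norm_num) 72 (q := 37) (by simp) (by norm_num)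
  rw [Real.log_div (by norm_num) (by norm_num), Real.log_pow]
  push_cast
  linarith

theorem remainder_term_lt {d : ℕ} (hK : 30000 ≤ K) (hd : 250 * d ≤ 57 * K) :
    256 * 2 ^ d * 2 ^ (17 * (17 * K)) *
      (1 / 2 * ((5 * K : ℕ) + 1) * (7 / 2 ^ 15) ^ (17 * K + 5 * K + 1) /
        (32761 / 2 ^ 15 *
          ((17 * K + 5 * K).choose (17 * K) * (32761 / 2 ^ 15) ^ (5 * K)))) <
      Real.exp (2.765 * K) / 2 := by
  have hK' : (30000 : ℝ) ≤ K := mod_cast hK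
  have hd' : (250 : ℝ) * d ≤ 57 * K := mod_cast hd
  have hchoose : 0 < (17 * K + 5 * K).choose (17 * K) := Nat.choose_pos (by lia)
  have hlog := (log_choose_mem_Icc hK).1
  have hlinear : Real.log (1 / 2 * ((5 * K : ℕ) + 1)) ≤ 13 + 0.00003 * K := by
    refine (Real.log_le_log (by positivity) ?_).trans (log_twenty_two_mul_le hK)
    push_cast
    linarith
  have hconst : Real.log 256 ≤ 6 := by
    simpa using log_le_div_of_pow_le (x := 256) (by simp) 6 one_ne_zero (by norm_num)
  have hexponent : (d + 17 * (17 * K) - 15 * (22 * K + 1)) * Real.log 2 ≤ -28.26 * K := by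
    calc _ ≤ -40.772 * K * Real.log 2 := by
          gcongr
          linarith
      _ ≤ _ := by nlinarith [Real.log_two_gt_d9]
  have hpoint := mul_le_mul_of_nonneg_left le_log_point (by positivity : (0 : ℝ) ≤ 5 * K + 1)
  have hdist := mul_le_mul_of_nonneg_left log_one_sub_point_le
    (by positivity : (0 : ℝ) ≤ 22 * K + 1)
  have hpos : (0 : ℝ) < 1 / 2 * ((5 * K : ℕ) + 1) := by positivity
  generalize (1 / 2 * ((5 * K : ℕ) + 1) : ℝ) = c at hlinear hpos ⊢
  rw [← Real.log_lt_log_iff (by positivity) (by positivity),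
    Real.log_div (by positivity) two_ne_zero, Real.log_exp,
    Real.log_mul (by positivity) (by positivity), Real.log_mul (by positivity) (by positivity),
    Real.log_mul (by positivity) (by positivity), Real.log_div (by positivity) (by positivity),
    Real.log_mul (by positivity) (by positivity), Real.log_mul (by positivity) (by positivity),
    Real.log_mul (by positivity) (by positivity)]
  simp only [Real.log_pow]
  push_cast
  linarith [Real.log_two_lt_d9]

theorem exists_pade_parameters {m : ℕ} (hm : 6150000 ≤ m) :
    ∃ K d, 30000 ≤ K ∧ m = d + 204 * K ∧ 250 * d ≤ 57 * K ∧ 51057 * K ≤ 250 * m + 51057 ∧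
      Nat.log 2 (5 * K) ≤ d := by
  -- A ratio `m / K` near `51057 / 250` is large enough for `approximation_term_lt` and small enough
  -- for `remainder_term_lt`.
  obtain ⟨K, hK⟩ : ∃ K, K = 250 * m / 51057 + 1 := ⟨_, rfl⟩
  obtain ⟨d, rfl⟩ : ∃ d, m = d + 204 * K := ⟨m - 204 * K, by lia⟩
  refine ⟨K, d, by lia, rfl, by lia, by lia, ?_⟩
  have hpow : 5 * K < 2 ^ d := by
    obtain ⟨t, rfl⟩ := Nat.exists_eq_add_of_le (show 10 ≤ d by lia)
    have := Nat.lt_two_pow_self (n := t)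
    rw [pow_add]
    lia
  exact (Nat.log_lt_of_lt_pow (by lia) hpow).le

theorem content_lt_of_abs_sub_le {K d X : ℕ} (hK : 30000 ≤ K) (hd : 250 * d ≤ 57 * K)
    (hm : 51057 * K ≤ 250 * (d + 204 * K) + 51057) (hlog : Nat.log 2 (5 * K) ≤ d) (hX : Odd X)
    (hclose : |X - 2 ^ (d + 204 * K) * √2| ≤ (2 : ℝ) ^ (-(0.48 : ℝ) * (d + 204 * K : ℕ))) :
    content (17 * K) (5 * K) < Real.exp (2.765 * K) := by
  have hab : 5 * K ≤ 17 * K := by lia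
  have hν : (0 : ℝ) ≤ 1 / 2 := by norm_num
  have hν' : (1 / 2 : ℝ) ≤ 1 := by norm_num
  have happrox := content_le_abs_sub_add_abs_sub hab hlog hX
  rw [show 17 * (17 * K - 5 * K) = 204 * K by lia] at happrox
  have hrem := abs_padeNum_sub_rpow_mul_padeDen_le hν hν' hab (w := 32761 / 2 ^ 15)
    (by norm_num) (by norm_num)
  rw [← Real.sqrt_eq_rpow, show (1 : ℝ) - 32761 / 2 ^ 15 = 7 / 2 ^ 15 by norm_num] at hrem
  have hden_le : (padeDen (1 / 2) (17 * K) (5 * K)).eval (32761 / 2 ^ 15) ≤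
      (17 * K + 5 * K).choose (17 * K) := by
    rw [← eval_one_padeDen (1 / 2)]
    exact padeDen_monotoneOn hν hν' hab (Set.mem_Ici.2 (by norm_num)) (Set.mem_Ici.2 zero_le_one)
      (by norm_num)
  have hle_den := choose_mul_pow_le_eval_padeDen hν hν' hab (t := 32761 / 2 ^ 15) (by norm_num)
    (by norm_num)
  have hchoose : 0 < (17 * K + 5 * K).choose (17 * K) := Nat.choose_pos (by lia)
  have hden_pos := eval_padeDen_pos hν hν' hab (t := 32761 / 2 ^ 15) (by norm_num) (by norm_num)
  calc (content (17 * K) (5 * K) : ℝ) ≤ _ := happrox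
    _ ≤ 181 * (2 : ℝ) ^ (-(0.48 : ℝ) * (d + 204 * K : ℕ)) *
          (2 ^ (17 * (5 * K)) * ((17 * K + 5 * K).choose (17 * K) : ℝ)) +
        256 * 2 ^ d * 2 ^ (17 * (17 * K)) *
          (1 / 2 * ((5 * K : ℕ) + 1) * (7 / 2 ^ 15) ^ (17 * K + 5 * K + 1) /
            (32761 / 2 ^ 15 *
              ((17 * K + 5 * K).choose (17 * K) * (32761 / 2 ^ 15) ^ (5 * K)))) := by
      refine add_le_add (by gcongr) (mul_le_mul_of_nonneg_left (hrem.trans ?_) (by positivity))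
      gcongr
    _ < Real.exp (2.765 * K) / 2 + Real.exp (2.765 * K) / 2 :=
      add_lt_add (approximation_term_lt hK hm) (remainder_term_lt hK hd)
    _ = Real.exp (2.765 * K) := add_halves _

theorem two_rpow_lt_abs_sub_of_le {m X : ℕ} (hm : 6150000 ≤ m) (hX : Odd X) :
    (2 : ℝ) ^ (-(0.48 : ℝ) * m) < |X - 2 ^ m * √2| := by
  obtain ⟨K, d, hK, rfl, hd, hm', hlog⟩ := exists_pade_parameters hm
  by_contra! hclose
  have hlt := content_lt_of_abs_sub_le hK hd hm' hlog hX hclose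
  have hcontent : (0 : ℝ) < content (17 * K) (5 * K) :=
    mod_cast Nat.pos_of_ne_zero (content_ne_zero _ _)
  exact hlt.not_ge ((Real.le_log_iff_exp_le hcontent).1 (mul_le_log_content hK))

end LargeRange

end SquarePowerGap

/-- Lemma 2.3: for odd positive `X` and `n > 1`, `|X² - 2ⁿ| > 2^(0.26 n)` unless
`X² - 2ⁿ = 1` or `-7`. -/
theorem stmt_8 (X n : ℕ) (hX : 0 < X) (hodd : Odd X) (hn : 1 < n) :
    (X : ℤ) ^ 2 - 2 ^ n = 1 ∨ (X : ℤ) ^ 2 - 2 ^ n = -7 ∨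
      ((|(X : ℤ) ^ 2 - 2 ^ n| : ℤ) : ℝ) > (2 : ℝ) ^ ((0.26 : ℝ) * n) := by
  have hcases : SquarePowerGap.IsSeparated n X ∨ X ^ 2 = 2 ^ n + 1 ∨ X ^ 2 + 7 = 2 ^ n := by
    rcases lt_or_ge n 520 with hsmall | hlarge
    · exact SquarePowerGap.isSeparated_or_eq_of_lt hn hsmall hodd
    left
    rcases n.even_or_odd' with ⟨m, rfl | rfl⟩
    · exact SquarePowerGap.isSeparated_two_mul (by lia) hodd
    · apply SquarePowerGap.isSeparated_of_lt_abs_sub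
      rcases lt_or_ge m 6150000 with hm | hm
      · exact SquarePowerGap.two_rpow_lt_abs_sub_of_lt (by lia) hm X
      · exact SquarePowerGap.two_rpow_lt_abs_sub_of_le hm hodd
  rcases hcases with hsep | hone | hseven
  · exact .inr (.inr (SquarePowerGap.isSeparated_iff.1 hsep))
  · zify at hone
    exact .inl (by linarith)
  · zify at hseven
    exact .inr (.inl (by linarith))
end
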